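/- arXiv:2406.13293 — 3 statements merged into one kernel-verified Lean document; each statement's English description precedes it below -/
import Mathlib

section
/- For every (K,c) ∈ D₁ there exists a unique real number μ_b = μ_b(K,c) such that the system (TV) with parameter μ has a solution satisfying condition (HE1) if and only if μ = μ_b; likewise, there exists a unique real number μ_f = μ_f(K,c) such that (TV) with parameter μ has a solution satisfying condition (HE2) if and only if μ = μ_f. -/
open Set Filter MeasureTheory

noncomputable section

namespace TrafficTW

/-- `f(u) = (K u - V(u) - c)/K`. -/
def fTV (V : ℝ → ℝ) (K c u : ℝ) : ℝ := (K * u - V u - c) / K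

/-- `f'(u) = (K - V'(u))/K`. -/
def fdTV (V' : ℝ → ℝ) (K u : ℝ) : ℝ := (K - V' u) / K

/-- `h(u,μ) = f'(u) + μ`. -/
def hTV (V' : ℝ → ℝ) (K μ u : ℝ) : ℝ := fdTV V' K u + μ

/-- `g₁(u) = 1/(τ κ(1/u))`. -/
def g1TV (κ : ℝ → ℝ) (τ u : ℝ) : ℝ := 1 / (τ * κ (1 / u))

/-- `g₂(u) = u/(2 τ κ(1/u))`. -/
def g2TV (κ : ℝ → ℝ) (τ u : ℝ) : ℝ := u / (2 * τ * κ (1 / u))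

/-- The traveling-wave system (TV): `u' = w`, `w' = g₁ f + g₂ h w`. -/
def IsTVSol (V V' κ : ℝ → ℝ) (τ K c μ : ℝ) (u w : ℝ → ℝ) : Prop :=
  (∀ z, HasDerivAt u (w z) z) ∧
  (∀ z, HasDerivAt w
    (g1TV κ τ (u z) * fTV V K c (u z) + g2TV κ τ (u z) * hTV V' K μ (u z) * w z) z)

/-- Assumption (A1), where `V'` and `V''` are the first and second derivatives of `V`. -/
def A1 (V V' V'' : ℝ → ℝ) (UM : ℝ) : Prop :=
  (∀ u ∈ Ici (0:ℝ), HasDerivWithinAt V (V' u) (Ici 0) u) ∧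
  ContinuousOn V' (Ici 0) ∧
  (∀ u ∈ Ioi (0:ℝ), HasDerivAt V' (V'' u) u) ∧
  ContinuousOn V'' (Ioi 0) ∧
  (∀ u, 0 < u → 0 < V' u) ∧ (∃ M, ∀ u, 0 < u → V' u ≤ M) ∧
  Tendsto V' atTop (nhds 0) ∧
  0 < UM ∧ (∀ u, 0 < u → V' u ≤ V' UM) ∧
  (∀ u, 0 < u → (V'' u = 0 ↔ u = UM))

/-- Assumption (A2). -/
def A2 (κ : ℝ → ℝ) : Prop :=
  ContDiffOn ℝ 1 κ (Ioi 0) ∧ ∀ ρ, 0 < ρ → 0 < κ ρ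

/-- `c₀ = -V(0)`. -/
def c0v (V : ℝ → ℝ) : ℝ := - V 0

/-- `c_M(K) = K u_M(K) - V(u_M(K))`, where `uMx` is the function `K ↦ u_M(K)`. -/
def cMf (V : ℝ → ℝ) (uMx : ℝ → ℝ) (K : ℝ) : ℝ := K * uMx K - V (uMx K)

/-- `c_m(K) = K u_m(K) - V(u_m(K))`, where `umx` is the function `K ↦ u_m(K)`. -/
def cmf (V : ℝ → ℝ) (umx : ℝ → ℝ) (K : ℝ) : ℝ := K * umx K - V (umx K)

/-- `c₁(K) = max (c₀, c_m(K))`. -/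
def c1f (V : ℝ → ℝ) (umx : ℝ → ℝ) (K : ℝ) : ℝ := max (c0v V) (cmf V umx K)

/-- `uMx K = u_M(K)` is the unique local maximum point of `u ↦ K u - V(u)`, characterized
by `u_M(K) ∈ (0, U_M)` and `V'(u_M(K)) = K`, for `K ∈ (K₀, K_M)`. -/
def UMaxHyp (V' : ℝ → ℝ) (UM : ℝ) (uMx : ℝ → ℝ) : Prop :=
  ∀ K, V' 0 < K → K < V' UM → uMx K ∈ Ioo 0 UM ∧ V' (uMx K) = K

/-- `umx K = u_m(K)` is the unique local minimum point of `u ↦ K u - V(u)`, characterized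
by `u_m(K) ∈ (U_M, ∞)` and `V'(u_m(K)) = K`, for `K ∈ (0, K_M)`. -/
def UMinHyp (V' : ℝ → ℝ) (UM : ℝ) (umx : ℝ → ℝ) : Prop :=
  ∀ K, 0 < K → K < V' UM → UM < umx K ∧ V' (umx K) = K

/-- Characterization of `K₁ ∈ (K₀, K_M)`: `c_m(K) < c₀` for `K < K₁` and `c_m(K) > c₀`
for `K > K₁`. -/
def K1Hyp (V V' : ℝ → ℝ) (UM : ℝ) (umx : ℝ → ℝ) (K₁ : ℝ) : Prop :=
  V' 0 < K₁ ∧ K₁ < V' UM ∧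
  (∀ K, 0 < K → K < K₁ → cmf V umx K < c0v V) ∧
  cmf V umx K₁ = c0v V ∧
  (∀ K, K₁ < K → K < V' UM → c0v V < cmf V umx K)

/-- The parameter region `D₁`. -/
def D1 (V V' : ℝ → ℝ) (UM : ℝ) (uMx umx : ℝ → ℝ) : Set (ℝ × ℝ) :=
  {p | V' 0 < p.1 ∧ p.1 < V' UM ∧ c1f V umx p.1 < p.2 ∧ p.2 < cMf V uMx p.1}

/-- The parameter region `D₂`. -/
def D2 (V V' : ℝ → ℝ) (umx : ℝ → ℝ) (K₁ : ℝ) : Set (ℝ × ℝ) :=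
  {p | (V' 0 < p.1 ∧ p.1 < K₁ ∧ p.2 = c0v V) ∨
       (0 < p.1 ∧ p.1 < K₁ ∧ cmf V umx p.1 < p.2 ∧ p.2 < c0v V)}

/-- For `(K,c) ∈ D₁`: `u₁ < u₀ < u₂` are the exactly three positive zeros of `f`. -/
def ZerosD1 (V : ℝ → ℝ) (K c u1 u0 u2 : ℝ) : Prop :=
  0 < u1 ∧ u1 < u0 ∧ u0 < u2 ∧
  fTV V K c u1 = 0 ∧ fTV V K c u0 = 0 ∧ fTV V K c u2 = 0 ∧
  ∀ u, 0 < u → fTV V K c u = 0 → u = u1 ∨ u = u0 ∨ u = u2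

/-- For `(K,c) ∈ D₂`: `u₀ < u₂` are the exactly two positive zeros of `f`. -/
def ZerosD2 (V : ℝ → ℝ) (K c u0 u2 : ℝ) : Prop :=
  0 < u0 ∧ u0 < u2 ∧ fTV V K c u0 = 0 ∧ fTV V K c u2 = 0 ∧
  ∀ u, 0 < u → fTV V K c u = 0 → u = u0 ∨ u = u2

/-- Condition (HE1). -/
def HE1 (u1 u2 : ℝ) (u w : ℝ → ℝ) : Prop :=
  Tendsto u atBot (nhds u1) ∧ Tendsto u atTop (nhds u2) ∧
  Tendsto w atBot (nhds 0) ∧ Tendsto w atTop (nhds 0) ∧ ∀ z, 0 < w z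

/-- Condition (HE2). -/
def HE2 (u1 u2 : ℝ) (u w : ℝ → ℝ) : Prop :=
  Tendsto u atBot (nhds u2) ∧ Tendsto u atTop (nhds u1) ∧
  Tendsto w atBot (nhds 0) ∧ Tendsto w atTop (nhds 0) ∧ ∀ z, w z < 0

/-- Condition (HO) with level `ub`. -/
def HO (ub : ℝ) (u w : ℝ → ℝ) : Prop :=
  Tendsto u atBot (nhds ub) ∧ Tendsto u atTop (nhds ub) ∧
  Tendsto w atBot (nhds 0) ∧ Tendsto w atTop (nhds 0) ∧
  ¬ (∀ z, u z = ub ∧ w z = 0)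

/-- (TV) with parameter `μ` has a positive solution satisfying (HE1). -/
def HasHE1 (V V' κ : ℝ → ℝ) (τ K c μ u1 u2 : ℝ) : Prop :=
  ∃ u w : ℝ → ℝ, IsTVSol V V' κ τ K c μ u w ∧ (∀ z, 0 < u z) ∧ HE1 u1 u2 u w

/-- (TV) with parameter `μ` has a positive solution satisfying (HE2). -/
def HasHE2 (V V' κ : ℝ → ℝ) (τ K c μ u1 u2 : ℝ) : Prop :=
  ∃ u w : ℝ → ℝ, IsTVSol V V' κ τ K c μ u w ∧ (∀ z, 0 < u z) ∧ HE2 u1 u2 u w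

/-- (TV) with parameter `μ` has a positive solution satisfying (HO) with level `ub`. -/
def HasHO (V V' κ : ℝ → ℝ) (τ K c μ ub : ℝ) : Prop :=
  ∃ u w : ℝ → ℝ, IsTVSol V V' κ τ K c μ u w ∧ (∀ z, 0 < u z) ∧ HO ub u w

/-- Condition (H): `∫₁^∞ dρ/(ρ³ κ(ρ)) = ∞`. -/
def CondH (κ : ℝ → ℝ) : Prop :=
  ¬ IntegrableOn (fun ρ => 1 / (ρ ^ 3 * κ ρ)) (Ioi 1)

/-- Condition (C). -/
def CondC (V' κ : ℝ → ℝ) (UM K₁ K : ℝ) : Prop :=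
  (K₁ < K ∧ K < V' UM) ∨ (CondH κ ∧ V' 0 < K ∧ K ≤ K₁)

/-- Periodic solution. -/
def IsPeriodicSol (u w : ℝ → ℝ) : Prop :=
  ∃ Z, 0 < Z ∧ ∀ z, u (z + Z) = u z ∧ w (z + Z) = w z

/-- Nonconstant pair of functions. -/
def Nonconst (u w : ℝ → ℝ) : Prop := ∃ z, u z ≠ u 0 ∨ w z ≠ w 0

/-- Discriminant of the Jacobian at an equilibrium `(u,0)`. -/
def discTV (V' κ : ℝ → ℝ) (τ K u μ : ℝ) : ℝ :=
  (g2TV κ τ u) ^ 2 * (hTV V' K μ u) ^ 2 + 4 * g1TV κ τ u * fdTV V' K u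

/-- The eigenvalue `λ₊(u)`. -/
def lamP (V' κ : ℝ → ℝ) (τ K u μ : ℝ) : ℝ :=
  (g2TV κ τ u * hTV V' K μ u + Real.sqrt (discTV V' κ τ K u μ)) / 2

/-- The eigenvalue `λ₋(u)`. -/
def lamM (V' κ : ℝ → ℝ) (τ K u μ : ℝ) : ℝ :=
  (g2TV κ τ u * hTV V' K μ u - Real.sqrt (discTV V' κ τ K u μ)) / 2

/-- `Z` is the minimal period of `(u,w)`. -/
def IsMinPeriod (u w : ℝ → ℝ) (Z : ℝ) : Prop :=
  0 < Z ∧ (∀ z, u (z + Z) = u z ∧ w (z + Z) = w z) ∧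
  ∀ Z', 0 < Z' → (∀ z, u (z + Z') = u z ∧ w (z + Z') = w z) → Z ≤ Z'


section

open Topology

lemma slope_ex {p p' : ℝ → ℝ} {l r : ℝ} (hc : ContinuousOn p (Icc l r))
    (hd : ∀ x ∈ Ioo l r, HasDerivAt p (p' x) x) {x y : ℝ} (hx : l ≤ x) (hxy : x < y)
    (hy : y ≤ r) : ∃ t ∈ Ioo x y, p y - p x = p' t * (y - x) := by
  obtain ⟨t, ht, h⟩ := exists_hasDerivAt_eq_slope p p' hxy (hc.mono (Icc_subset_Icc hx hy))
    (fun t ht => hd t ⟨hx.trans_lt ht.1, ht.2.trans_le hy⟩)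
  refine ⟨t, ht, ?_⟩
  have : y - x ≠ 0 := by linarith
  rw [h]; field_simp

lemma comp_nonneg {d d' : ℝ → ℝ} {l r : ℝ} (hc : ContinuousOn d (Icc l r))
    (hd : ∀ x ∈ Ioo l r, HasDerivAt d (d' x) x) (h0 : 0 ≤ d l)
    (h : ∀ x ∈ Ioo l r, d x < 0 → 0 ≤ d' x) : ∀ x ∈ Icc l r, 0 ≤ d x := by
  intro x hx
  by_contra hneg
  push Not at hneg
  have hcx : ContinuousOn d (Icc l x) := hc.mono (Icc_subset_Icc le_rfl hx.2)
  have hcl : IsClosed (Icc l x ∩ d ⁻¹' Ici 0) := hcx.preimage_isClosed_of_isClosed isClosed_Icc isClosed_Ici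
  have hcomp : IsCompact (Icc l x ∩ d ⁻¹' Ici 0) :=
    isCompact_Icc.of_isClosed_subset hcl inter_subset_left
  obtain ⟨s, hs, hmax⟩ := hcomp.exists_isGreatest ⟨l, ⟨le_rfl, hx.1⟩, h0⟩
  have hs0 : 0 ≤ d s := hs.2
  have hsx : s < x := lt_of_le_of_ne hs.1.2 (by rintro rfl; linarith)
  obtain ⟨t, ht, he⟩ := slope_ex hc hd hs.1.1 hsx hx.2
  have htn : d t < 0 := by
    by_contra hh
    push Not at hh
    have := hmax ⟨⟨hs.1.1.trans ht.1.le, ht.2.le⟩, hh⟩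
    linarith [ht.1]
  have := h t ⟨hs.1.1.trans_lt ht.1, ht.2.trans_le hx.2⟩ htn
  nlinarith

lemma ode_trunc {G A : ℝ → ℝ} {l r p0 η ε : ℝ} (hlr : l < r) (hη : 0 < η) (hε : 0 < ε)
    (hG : ContinuousOn G (Icc l r)) (hA : ContinuousOn A (Icc l r))
    (hG0 : ∀ x ∈ Icc l r, 0 ≤ G x) :
    ∃ p : ℝ → ℝ, ContinuousOn p (Icc l r) ∧ p l = p0 ∧
      ∀ x ∈ Ioo l r, HasDerivAt p ((G x + ε) / max (p x) η + A x) x := by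
  obtain ⟨MG, hMG⟩ := isCompact_Icc.exists_bound_of_continuousOn hG
  obtain ⟨MA, hMA⟩ := isCompact_Icc.exists_bound_of_continuousOn hA
  have hl : l ∈ Icc l r := ⟨le_rfl, hlr.le⟩
  have hMG0 : 0 ≤ MG := (norm_nonneg _).trans (hMG l hl)
  have hMA0 : 0 ≤ MA := (norm_nonneg _).trans (hMA l hl)
  let L : NNReal := ⟨(MG + ε) / η + MA, by positivity⟩
  let Kc : NNReal := ⟨(MG + ε) / (η * η), by positivity⟩
  let a : NNReal := L * ⟨r - l, by linarith⟩
  have hPL : IsPicardLindelof (fun x p : ℝ => (G x + ε) / max p η + A x) (⟨l, hl⟩ : Icc l r)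
      p0 a 0 L Kc := by
    refine ⟨?_, ?_, ?_, ?_⟩
    · intro t ht
      apply LipschitzWith.lipschitzOnWith
      apply LipschitzWith.of_dist_le_mul
      intro x y
      have hx : η ≤ max x η := le_max_right _ _
      have hy : η ≤ max y η := le_max_right _ _
      have hgt := hG0 t ht
      have hgt2 := (abs_le.1 (hMG t ht)).2
      have hxp : 0 < max x η := by linarith
      have hyp : 0 < max y η := by linarith
      have hm : |max y η - max x η| ≤ |y - x| := abs_max_sub_max_le_abs _ _ _
      rw [Real.dist_eq, Real.dist_eq]
      have e : (G t + ε) / max x η + A t - ((G t + ε) / max y η + A t)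
          = (G t + ε) / (max x η * max y η) * (max y η - max x η) := by
        field_simp; ring
      rw [e, abs_mul, abs_sub_comm x y]
      have h1 : |(G t + ε) / (max x η * max y η)| ≤ (MG + ε) / (η * η) := by
        rw [abs_of_nonneg (by positivity)]
        gcongr
      exact mul_le_mul h1 hm (abs_nonneg _) (by positivity)
    · intro p _
      exact ((hG.add continuousOn_const).div_const _).add hA
    · intro t ht x _
      have hx : η ≤ max x η := le_max_right _ _
      have hxp : 0 < max x η := by linarith
      have hgt := hG0 t ht
      have hgt2 := (abs_le.1 (hMG t ht)).2
      have h1 : |(G t + ε) / max x η| ≤ (MG + ε) / η := by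
        rw [abs_of_nonneg (by positivity)]
        gcongr
      calc ‖(G t + ε) / max x η + A t‖ ≤ ‖(G t + ε) / max x η‖ + ‖A t‖ := norm_add_le _ _
        _ ≤ (MG + ε) / η + MA := add_le_add h1 (hMA t ht)
    · simp only [sub_self, NNReal.coe_zero, sub_zero]
      rw [max_eq_left (by linarith)]
      exact le_rfl
  obtain ⟨p, hp0, hp⟩ := hPL.exists_eq_forall_mem_Icc_hasDerivWithinAt₀
  refine ⟨p, fun x hx => (hp x hx).continuousWithinAt, hp0, fun x hx => ?_⟩
  exact (hp x (Ioo_subset_Icc_self hx)).hasDerivAt (Icc_mem_nhds hx.1 hx.2)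

lemma ode_reg {G G' A : ℝ → ℝ} {l r δ N M ε : ℝ} (hlr : l < r) (hδ : 0 < δ) (hε : 0 < ε)
    (hδM : δ * M ≤ 1 / δ - N)
    (hG : ContinuousOn G (Icc l r)) (hA : ContinuousOn A (Icc l r))
    (hG0 : ∀ x ∈ Icc l r, 0 ≤ G x) (hGl : G l = 0)
    (hG' : ∀ x ∈ Ioo l r, HasDerivAt G (G' x) x) (hM : ∀ x ∈ Ioo l r, G' x ≤ M)
    (hN : ∀ x ∈ Icc l r, |A x| ≤ N) :
    ∃ p : ℝ → ℝ, ContinuousOn p (Icc l r) ∧ p l = δ * ε ∧ (∀ x ∈ Icc l r, δ * (G x + ε) ≤ p x) ∧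
      ∀ x ∈ Ioo l r, HasDerivAt p ((G x + ε) / p x + A x) x := by
  obtain ⟨p, hpc, hp0, hp⟩ := ode_trunc (p0 := δ * ε) hlr (mul_pos hδ hε) hε hG hA hG0
  have key : ∀ x ∈ Icc l r, 0 ≤ p x - δ * (G x + ε) := by
    apply comp_nonneg (d' := fun x => ((G x + ε) / max (p x) (δ * ε) + A x) - δ * (G' x))
    · exact hpc.sub (continuousOn_const.mul (hG.add continuousOn_const))
    · intro x hx
      exact (hp x hx).sub (((hG' x hx).add_const ε).const_mul δ)
    · simp [hp0, hGl]
    · intro x hx hneg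
      have hx' := Ioo_subset_Icc_self hx
      have hg := hG0 x hx'
      have hm : max (p x) (δ * ε) ≤ δ * (G x + ε) := max_le (by linarith) (by nlinarith)
      have hmp : 0 < max (p x) (δ * ε) := lt_max_of_lt_right (by positivity)
      have : 1 / δ ≤ (G x + ε) / max (p x) (δ * ε) := by
        rw [div_le_div_iff₀ hδ hmp]; linarith
      have h2 := (abs_le.1 (hN x hx')).1
      have h3 : δ * G' x ≤ δ * M := mul_le_mul_of_nonneg_left (hM x hx) hδ.le
      linarith
  have key' : ∀ x ∈ Icc l r, δ * (G x + ε) ≤ p x := fun x hx => by linarith [key x hx]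
  refine ⟨p, hpc, hp0, key', fun x hx => ?_⟩
  have hx' := Ioo_subset_Icc_self hx
  have h := hp x hx
  rwa [max_eq_left] at h
  have := key' x hx'
  have := hG0 x hx'
  nlinarith

/-- One-sided profile. -/
def Left (G A : ℝ → ℝ) (l r : ℝ) (p : ℝ → ℝ) : Prop :=
  ContinuousOn p (Icc l r) ∧ p l = 0 ∧ (∀ x ∈ Ioo l r, 0 < p x) ∧
    ∀ x ∈ Ioo l r, HasDerivAt p (G x / p x + A x) x

lemma lip_of {p p' : ℝ → ℝ} {l r Λ : ℝ} (hc : ContinuousOn p (Icc l r))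
    (hd : ∀ x ∈ Ioo l r, HasDerivAt p (p' x) x) (hb : ∀ x ∈ Ioo l r, |p' x| ≤ Λ) :
    ∀ x ∈ Icc l r, ∀ y ∈ Icc l r, |p y - p x| ≤ Λ * |y - x| := by
  have key : ∀ x ∈ Icc l r, ∀ y ∈ Icc l r, x < y → |p y - p x| ≤ Λ * |y - x| := by
    intro x hx y hy hxy
    obtain ⟨t, ht, he⟩ := slope_ex hc hd hx.1 hxy hy.2
    rw [he, abs_mul]
    exact mul_le_mul_of_nonneg_right (hb t ⟨hx.1.trans_lt ht.1, ht.2.trans_le hy.2⟩) (abs_nonneg _)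
  intro x hx y hy
  rcases lt_trichotomy x y with h | h | h
  · exact key x hx y hy h
  · simp [h]
  · rw [abs_sub_comm, abs_sub_comm y x]; exact key y hy x hx h

lemma left_exists {G G' A : ℝ → ℝ} {l r M : ℝ} (hlr : l < r)
    (hG : ContinuousOn G (Icc l r)) (hA : ContinuousOn A (Icc l r))
    (hGp : ∀ x ∈ Ioo l r, 0 < G x) (hGl : G l = 0) (hGr : G r = 0)
    (hG' : ∀ x ∈ Ioo l r, HasDerivAt G (G' x) x) (hM : ∀ x ∈ Ioo l r, G' x ≤ M) :
    ∃ p : ℝ → ℝ, Left G A l r p ∧ ∃ Λ, ∀ x ∈ Icc l r, ∀ y ∈ Icc l r, |p y - p x| ≤ Λ * |y - x| := by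
  obtain ⟨N, hN⟩ := isCompact_Icc.exists_bound_of_continuousOn hA
  have hN0 : 0 ≤ N := (norm_nonneg _).trans (hN l ⟨le_rfl, hlr.le⟩)
  have hG0 : ∀ x ∈ Icc l r, 0 ≤ G x := by
    intro x hx
    rcases eq_or_lt_of_le hx.1 with h | h
    · rw [← h, hGl]
    rcases eq_or_lt_of_le hx.2 with h' | h'
    · rw [h', hGr]
    exact (hGp x ⟨h, h'⟩).le
  obtain ⟨δ, hδ, hδM⟩ : ∃ δ : ℝ, 0 < δ ∧ δ * M ≤ 1 / δ - N := by
    refine ⟨1 / (|M| + N + 1), by positivity, ?_⟩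
    have h1 : 1 / (|M| + N + 1) * M ≤ 1 * |M| := by
      have : 1 / (|M| + N + 1) ≤ 1 := by
        rw [div_le_one (by positivity)]; linarith [abs_nonneg M]
      calc 1 / (|M| + N + 1) * M ≤ 1 / (|M| + N + 1) * |M| := by gcongr; exact le_abs_self M
        _ ≤ 1 * |M| := by gcongr
    rw [one_div_one_div]; linarith
  have hε : ∀ n : ℕ, (0:ℝ) < 1 / ((n:ℝ) + 1) := fun n => Nat.one_div_pos_of_nat
  have hex := fun n : ℕ => ode_reg hlr hδ (hε n) hδM hG hA hG0 hGl hG' hM hN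
  choose q hqc hq0 hqb hqd using hex
  have hqpos : ∀ n, ∀ x ∈ Icc l r, 0 < q n x := fun n x hx => by
    have h1 := hqb n x hx
    have h2 := hG0 x hx
    have h3 := hε n
    have : 0 < δ * (G x + 1 / ((n:ℝ) + 1)) := by positivity
    linarith
  have hquot : ∀ n : ℕ, ∀ x ∈ Icc l r, |(G x + 1 / ((n:ℝ) + 1)) / q n x + A x| ≤ 1 / δ + N := by
    intro n x hx
    have h1 := hqb n x hx
    have h2 := hG0 x hx
    have h3 := hε n
    have h4 := hqpos n x hx
    refine (abs_add_le _ _).trans (add_le_add ?_ (hN x hx))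
    rw [abs_of_nonneg (by positivity), div_le_div_iff₀ h4 hδ]
    linarith
  have hmono : ∀ n m : ℕ, n ≤ m → ∀ x ∈ Icc l r, q m x ≤ q n x := by
    intro n m hnm x hx
    have hnm' : 1 / ((m:ℝ) + 1) ≤ 1 / ((n:ℝ) + 1) := Nat.one_div_le_one_div hnm
    have := comp_nonneg (d := fun x => q n x - q m x) ((hqc n).sub (hqc m))
      (fun x hx => (hqd n x hx).sub (hqd m x hx)) (by
        simp only [hq0]; nlinarith) (by
        intro x hx hneg
        have hx' := Ioo_subset_Icc_self hx
        have h1 := hqpos n x hx'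
        have h2 := hqpos m x hx'
        have h3 := hG0 x hx'
        have h4 := hε m
        have : (G x + 1 / ((m:ℝ) + 1)) / q m x ≤ (G x + 1 / ((n:ℝ) + 1)) / q n x := by
          apply div_le_div₀ <;> first | positivity | linarith
        linarith) x hx
    linarith
  have hlim : ∀ x ∈ Icc l r, ∃ y, Tendsto (fun n => q n x) atTop (𝓝 y) := by
    intro x hx
    exact ⟨_, tendsto_atTop_ciInf (fun n m h => hmono n m h x hx)
      ⟨0, by rintro _ ⟨n, rfl⟩; exact (hqpos n x hx).le⟩⟩
  choose! p hp using hlim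
  have hplow : ∀ x ∈ Icc l r, δ * G x ≤ p x := by
    intro x hx
    refine ge_of_tendsto' (hp x hx) fun n => ?_
    have h1 := hqb n x hx
    have h3 := hε n
    nlinarith
  have hppos : ∀ x ∈ Ioo l r, 0 < p x := fun x hx =>
    lt_of_lt_of_le (mul_pos hδ (hGp x hx)) (hplow x (Ioo_subset_Icc_self hx))
  have hlip : ∀ x ∈ Icc l r, ∀ y ∈ Icc l r, |p y - p x| ≤ (1 / δ + N) * |y - x| := by
    intro x hx y hy
    refine le_of_tendsto' ((hp y hy).sub (hp x hx)).abs fun n => ?_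
    exact lip_of (hqc n) (hqd n) (fun x hx => hquot n x (Ioo_subset_Icc_self hx)) x hx y hy
  have hpc : ContinuousOn p (Icc l r) := by
    have : LipschitzOnWith ⟨1 / δ + N, by positivity⟩ p (Icc l r) :=
      LipschitzOnWith.of_dist_le_mul fun x hx y hy => hlip y hy x hx
    exact this.continuousOn
  have hl : l ∈ Icc l r := ⟨le_rfl, hlr.le⟩
  refine ⟨p, ⟨hpc, ?_, hppos, ?_⟩, _, hlip⟩
  · refine tendsto_nhds_unique (hp l hl) ?_
    simp only [hq0]
    simpa using (tendsto_one_div_add_atTop_nhds_zero_nat (𝕜 := ℝ)).const_mul δ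
  · intro x hx
    have hcF : ContinuousOn (fun t => G t / p t + A t) (Ioo l r) :=
      ((hG.mono Ioo_subset_Icc_self).div (hpc.mono Ioo_subset_Icc_self)
        (fun t ht => (hppos t ht).ne')).add (hA.mono Ioo_subset_Icc_self)
    have hint : ∀ y ∈ Ioo l r, p y = p x + ∫ t in x..y, (G t / p t + A t) := by
      intro y hy
      have hsub : uIcc x y ⊆ Ioo l r := (ordConnected_Ioo.uIcc_subset hx hy)
      have h1 : ∀ n : ℕ, ∫ t in x..y, ((G t + 1 / ((n:ℝ) + 1)) / q n t + A t) = q n y - q n x := by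
        intro n
        apply intervalIntegral.integral_eq_sub_of_hasDerivAt
        · exact fun t ht => hqd n t (hsub ht)
        · apply ContinuousOn.intervalIntegrable
          have hs2 : uIcc x y ⊆ Icc l r := hsub.trans Ioo_subset_Icc_self
          exact ((((hG.mono hs2).add continuousOn_const).div ((hqc n).mono hs2)
            (fun t ht => (hqpos n t (hs2 ht)).ne')).add (hA.mono hs2))
      have h2 : Tendsto (fun n : ℕ => ∫ t in x..y, ((G t + 1 / ((n:ℝ) + 1)) / q n t + A t)) atTop
          (𝓝 (∫ t in x..y, (G t / p t + A t))) := by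
        have hs3 : uIoc x y ⊆ Ioo l r := uIoc_subset_uIcc.trans hsub
        have hs2 : uIoc x y ⊆ Icc l r := hs3.trans Ioo_subset_Icc_self
        apply intervalIntegral.tendsto_integral_filter_of_dominated_convergence (fun _ => 1 / δ + N)
        · refine Eventually.of_forall fun n => ?_
          refine ContinuousOn.aestronglyMeasurable ?_ measurableSet_uIoc
          exact ((((hG.mono hs2).add continuousOn_const).div ((hqc n).mono hs2)
            (fun t ht => (hqpos n t (hs2 ht)).ne')).add (hA.mono hs2))
        · refine Eventually.of_forall fun n => Eventually.of_forall fun t ht => ?_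
          exact hquot n t (hs2 ht)
        · simp
        · refine Eventually.of_forall fun t ht => ?_
          have := tendsto_one_div_add_atTop_nhds_zero_nat (𝕜 := ℝ)
          have h3 := ((this.const_add (G t)).div (hp t (hs2 ht)) (hppos t (hs3 ht)).ne').add_const (A t)
          simpa using h3
      simp only [h1] at h2
      have := tendsto_nhds_unique h2 ((hp y (Ioo_subset_Icc_self hy)).sub (hp x (Ioo_subset_Icc_self hx)))
      linarith
    have hnh : Ioo l r ∈ 𝓝 x := Ioo_mem_nhds hx.1 hx.2
    have hD : HasDerivAt (fun y => p x + ∫ t in x..y, (G t / p t + A t)) (G x / p x + A x) x := by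
      refine (intervalIntegral.integral_hasDerivAt_right (by simp) ?_ (hcF.continuousAt hnh)).const_add _
      exact hcF.stronglyMeasurableAtFilter isOpen_Ioo x hx
    refine hD.congr_of_eventuallyEq ?_
    filter_upwards [hnh] with y hy using hint y hy

lemma left_cmp {G A B : ℝ → ℝ} {l r N : ℝ} {p q : ℝ → ℝ} (hN : 0 ≤ N)
    (hG0 : ∀ x ∈ Ioo l r, 0 ≤ G x) (hp : Left G A l r p) (hq : Left G B l r q)
    (hAB : ∀ x ∈ Ioo l r, A x ≤ B x + N) : ∀ x ∈ Icc l r, p x ≤ q x + N * (x - l) := by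
  obtain ⟨hpc, hpl, hpp, hpd⟩ := hp
  obtain ⟨hqc, hql, hqp, hqd⟩ := hq
  intro x hx
  have := comp_nonneg (d := fun x => q x + N * (x - l) - p x)
    (d' := fun x => (G x / q x + B x) + N * 1 - (G x / p x + A x))
    ((hqc.add (by fun_prop)).sub hpc)
    (fun x hx => ((hqd x hx).add (((hasDerivAt_id x).sub_const l).const_mul N)).sub (hpd x hx))
    (by simp [hpl, hql]) (by
      intro x hx hneg
      have h0 : 0 ≤ N * (x - l) := mul_nonneg hN (by linarith [hx.1])
      have h1 : G x / p x ≤ G x / q x :=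
        div_le_div_of_nonneg_left (hG0 x hx) (hqp x hx) (by linarith)
      have := hAB x hx
      linarith) x hx
  linarith

lemma left_lower {G A : ℝ → ℝ} {l r N : ℝ} {p : ℝ → ℝ}
    (hG0 : ∀ x ∈ Ioo l r, 0 ≤ G x) (hp : Left G A l r p)
    (hA : ∀ x ∈ Ioo l r, N ≤ A x) : ∀ x ∈ Icc l r, N * (x - l) ≤ p x := by
  obtain ⟨hpc, hpl, hpp, hpd⟩ := hp
  intro x hx
  have := comp_nonneg (d := fun x => p x - N * (x - l))
    (d' := fun x => (G x / p x + A x) - N * 1)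
    (hpc.sub (by fun_prop))
    (fun x hx => (hpd x hx).sub (((hasDerivAt_id x).sub_const l).const_mul N))
    (by simp [hpl]) (by
      intro x hx hneg
      have h1 : 0 ≤ G x / p x := div_nonneg (hG0 x hx) (hpp x hx).le
      have := hA x hx
      linarith) x hx
  linarith

lemma left_pos {G A : ℝ → ℝ} {l r g : ℝ} {p : ℝ → ℝ} (hlr : l < r)
    (hA : ContinuousOn A (Icc l r)) (hGr : G r = 0) (hg : g < 0) (hGd : HasDerivAt G g r)
    (hG0 : ∀ x ∈ Ioo l r, 0 ≤ G x) (hp : Left G A l r p) (hAr : 0 ≤ A r) : 0 < p r := by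
  obtain ⟨hpc, hpl, hpp, hpd⟩ := hp
  have hr : r ∈ Icc l r := ⟨hlr.le, le_rfl⟩
  have hpr : 0 ≤ p r := by
    have : Tendsto p (𝓝[Ioo l r] r) (𝓝 (p r)) := (hpc r hr).mono Ioo_subset_Icc_self
    have : (𝓝[Ioo l r] r).NeBot := by
      rw [← mem_closure_iff_nhdsWithin_neBot, closure_Ioo hlr.ne]; exact hr
    refine ge_of_tendsto ‹Tendsto p _ _› ?_
    filter_upwards [self_mem_nhdsWithin] with x hx using (hpp x hx).le
  refine lt_of_le_of_ne hpr fun hpr0 => ?_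
  set k := -g / 2 with hk
  have hkp : 0 < k := by rw [hk]; linarith
  obtain ⟨ε, hε, hεk⟩ : ∃ ε : ℝ, 0 < ε ∧ ε * ε ≤ k :=
    ⟨Real.sqrt k, Real.sqrt_pos.2 hkp, (Real.mul_self_sqrt hkp.le).le⟩
  have h1 : ∀ᶠ x in 𝓝[Icc l r] r, -ε < A x :=
    (hA r hr).eventually (lt_mem_nhds (by linarith))
  have h2 : ∀ᶠ x in 𝓝[≠] r, slope G r x < -k :=
    (hasDerivAt_iff_tendsto_slope.1 hGd).eventually (gt_mem_nhds (by rw [hk]; linarith))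
  have h1' : ∀ᶠ x in 𝓝[<] r, -ε < A x := by
    have : 𝓝[<] r ≤ 𝓝[Icc l r] r := by
      rw [← nhdsWithin_Ioo_eq_nhdsLT hlr]; exact nhdsWithin_mono _ Ioo_subset_Icc_self
    exact this h1
  have h2' : ∀ᶠ x in 𝓝[<] r, slope G r x < -k :=
    nhdsWithin_mono r (fun x hx => ne_of_lt hx) h2
  obtain ⟨s, hs, hsub⟩ := (mem_nhdsLT_iff_exists_Ioo_subset' hlr).1 
    (inter_mem (inter_mem h1' h2') (Ioo_mem_nhdsLT hlr))
  have hs' : s < r := hs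
  set y := (s + r) / 2
  have hyr : y < r := by simp only [y]; linarith
  have hsy : s < y := by simp only [y]; linarith
  have hup : ∀ x ∈ Ioo s r, p x ≤ ε * (r - x) := by
    intro x hx
    have hxl : l < x := (hsub hx).2.1
    obtain ⟨t, ht, he⟩ := slope_ex hpc hpd hxl.le hx.2 le_rfl
    have htm := hsub (⟨hx.1.trans ht.1, ht.2⟩ : t ∈ Ioo s r)
    have hA1 : -ε < A t := htm.1.1
    have hG1 : 0 ≤ G t / p t := div_nonneg (hG0 t htm.2) (hpp t htm.2).le
    have : -ε * (r - x) ≤ (G t / p t + A t) * (r - x) :=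
      mul_le_mul_of_nonneg_right (by linarith) (by linarith [hx.2])
    linarith
  have hym := hsub ⟨hsy, hyr⟩
  obtain ⟨t, ht, he⟩ := slope_ex hpc hpd hym.2.1.le hyr le_rfl
  have hti : t ∈ Ioo s r := ⟨hsy.trans ht.1, ht.2⟩
  have htm := hsub hti
  have hA1 : -ε < A t := htm.1.1
  have hsl : slope G r t < -k := htm.1.2
  rw [slope_def_field, hGr, sub_zero] at hsl
  have hGt : k * (r - t) ≤ G t := by
    rw [div_lt_iff_of_neg (by linarith [ht.2])] at hsl
    linarith
  have hpt := hpp t htm.2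
  have h5 : ε ≤ G t / p t := by
    rw [le_div_iff₀ hpt]
    have := mul_le_mul_of_nonneg_left (hup t hti) hε.le
    have := mul_le_mul_of_nonneg_right hεk (by linarith [ht.2] : 0 ≤ r - t)
    linarith
  have h6 : 0 ≤ (G t / p t + A t) * (r - y) := mul_nonneg (by linarith) (by linarith)
  have := hpp y hym.2
  linarith
/-- Two-sided profile. -/
def Prof (G A : ℝ → ℝ) (l r : ℝ) (p : ℝ → ℝ) : Prop :=
  ContinuousOn p (Icc l r) ∧ p l = 0 ∧ p r = 0 ∧ (∀ x ∈ Ioo l r, 0 < p x) ∧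
    ∀ x ∈ Ioo l r, HasDerivAt p (G x / p x + A x) x

/-- Standing hypotheses of the abstract bistable problem. -/
structure Hyp (G G' a b : ℝ → ℝ) (u1 u0 u2 M : ℝ) : Prop where
  h10 : u1 < u0
  h02 : u0 < u2
  der : ∀ x ∈ Icc u1 u2, HasDerivAt G (G' x) x
  bd : ∀ x ∈ Icc u1 u2, G' x ≤ M
  g1 : G u1 = 0
  g0 : G u0 = 0
  g2 : G u2 = 0
  gneg : G' u0 < 0
  gp : ∀ x ∈ Ioo u1 u0, 0 < G x
  gn : ∀ x ∈ Ioo u0 u2, G x < 0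
  ca : ContinuousOn a (Icc u1 u2)
  cb : ContinuousOn b (Icc u1 u2)
  bp : ∀ x ∈ Icc u1 u2, 0 < b x

lemma refl_right {G A p : ℝ → ℝ} {l r : ℝ} (hc : ContinuousOn p (Icc l r)) (hr : p r = 0)
    (hp : ∀ x ∈ Ioo l r, 0 < p x) (hd : ∀ x ∈ Ioo l r, HasDerivAt p (G x / p x + A x) x) :
    Left (fun s => -G (-s)) (fun s => -A (-s)) (-r) (-l) (fun s => p (-s)) := by
  have hm : ∀ x, x ∈ Icc (-r) (-l) → -x ∈ Icc l r := fun x hx =>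
    ⟨by linarith [hx.2], by linarith [hx.1]⟩
  have hm' : ∀ x, x ∈ Ioo (-r) (-l) → -x ∈ Ioo l r := fun x hx =>
    ⟨by linarith [hx.2], by linarith [hx.1]⟩
  refine ⟨hc.comp continuousOn_neg hm, by simpa using hr, fun x hx => hp _ (hm' x hx), ?_⟩
  intro x hx
  have := (hd _ (hm' x hx)).comp x (hasDerivAt_neg x)
  exact this.congr_deriv (by ring)

lemma refl_left {G A q : ℝ → ℝ} {l r : ℝ}
    (h : Left (fun s => -G (-s)) (fun s => -A (-s)) (-r) (-l) q) :
    ContinuousOn (fun x => q (-x)) (Icc l r) ∧ q (-r) = 0 ∧ (∀ x ∈ Ioo l r, 0 < q (-x)) ∧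
    ∀ x ∈ Ioo l r, HasDerivAt (fun x => q (-x)) (G x / q (-x) + A x) x := by
  obtain ⟨hc, h0, hp, hd⟩ := h
  have hm : ∀ x, x ∈ Icc l r → -x ∈ Icc (-r) (-l) := fun x hx =>
    ⟨by linarith [hx.2], by linarith [hx.1]⟩
  have hm' : ∀ x, x ∈ Ioo l r → -x ∈ Ioo (-r) (-l) := fun x hx =>
    ⟨by linarith [hx.2], by linarith [hx.1]⟩
  refine ⟨hc.comp continuousOn_neg hm, h0, fun x hx => hp _ (hm' x hx), ?_⟩
  intro x hx
  have := (hd _ (hm' x hx)).comp x (hasDerivAt_neg x)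
  exact this.congr_deriv (by simp only [neg_neg]; ring)

lemma prof_unique_aux {G G' a b : ℝ → ℝ} {u1 u0 u2 M μ ν : ℝ} (H : Hyp G G' a b u1 u0 u2 M)
    {p q : ℝ → ℝ} (hp : Prof G (fun x => a x + μ * b x) u1 u2 p)
    (hq : Prof G (fun x => a x + ν * b x) u1 u2 q) : ¬ μ < ν := by
  intro hlt
  obtain ⟨hpc, hp1, hp2, hpp, hpd⟩ := hp
  obtain ⟨hqc, hq1, hq2, hqp, hqd⟩ := hq
  have h10 := H.h10
  have h02 := H.h02
  have s1 : Icc u1 u0 ⊆ Icc u1 u2 := Icc_subset_Icc le_rfl h02.le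
  have s1' : Ioo u1 u0 ⊆ Ioo u1 u2 := Ioo_subset_Ioo le_rfl h02.le
  have s2 : Icc u0 u2 ⊆ Icc u1 u2 := Icc_subset_Icc h10.le le_rfl
  have s2' : Ioo u0 u2 ⊆ Ioo u1 u2 := Ioo_subset_Ioo h10.le le_rfl
  have hL : ∀ x ∈ Icc u1 u0, p x ≤ q x + 0 * (x - u1) :=
    left_cmp (G := G) (A := fun x => a x + μ * b x) (B := fun x => a x + ν * b x) le_rfl
      (fun x hx => (H.gp x hx).le)
      ⟨hpc.mono s1, hp1, fun x hx => hpp x (s1' hx), fun x hx => hpd x (s1' hx)⟩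
      ⟨hqc.mono s1, hq1, fun x hx => hqp x (s1' hx), fun x hx => hqd x (s1' hx)⟩
      (fun x hx => by
        have := H.bp x (s1 (Ioo_subset_Icc_self hx)); nlinarith)
  have hR : ∀ s ∈ Icc (-u2) (-u0), q (-s) ≤ p (-s) + 0 * (s - (-u2)) :=
    left_cmp le_rfl (fun s hs => by
        have := H.gn (-s) ⟨by linarith [hs.2], by linarith [hs.1]⟩; linarith)
      (refl_right (A := fun x => a x + ν * b x) (hqc.mono s2) hq2 (fun x hx => hqp x (s2' hx)) (fun x hx => hqd x (s2' hx)))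
      (refl_right (A := fun x => a x + μ * b x) (hpc.mono s2) hp2 (fun x hx => hpp x (s2' hx)) (fun x hx => hpd x (s2' hx)))
      (fun s hs => by
        have := H.bp (-s) (s2 ⟨by linarith [hs.2], by linarith [hs.1]⟩); nlinarith)
  have hR' : ∀ x ∈ Icc u0 u2, q x ≤ p x := fun x hx => by
    have := hR (-x) ⟨by linarith [hx.2], by linarith [hx.1]⟩
    simpa using this
  have hL' : ∀ x ∈ Icc u1 u0, p x ≤ q x := fun x hx => by simpa using hL x hx
  have heq : p u0 = q u0 := le_antisymm (hL' u0 ⟨h10.le, le_rfl⟩) (hR' u0 ⟨le_rfl, h02.le⟩)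
  have hu0 : u0 ∈ Ioo u1 u2 := ⟨h10, h02⟩
  have hD := (hqd u0 hu0).sub (hpd u0 hu0)
  have hle := le_of_tendsto (hasDerivAt_iff_tendsto_slope.1 hD) (b := 0) (by
    filter_upwards [mem_nhdsWithin_of_mem_nhds (Ioo_mem_nhds hu0.1 hu0.2)] with x hx
    rw [slope_def_field]
    simp only [Pi.sub_apply, heq, sub_self, sub_zero]
    rcases le_total x u0 with h | h
    · exact div_nonpos_of_nonneg_of_nonpos (sub_nonneg.2 (hL' x ⟨hx.1.le, h⟩)) (by linarith)
    · exact div_nonpos_of_nonpos_of_nonneg (sub_nonpos.2 (hR' x ⟨h, hx.2.le⟩)) (by linarith))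
  rw [H.g0] at hle
  have := H.bp u0 (Ioo_subset_Icc_self hu0)
  simp only [zero_div, zero_add] at hle
  nlinarith

lemma prof_exists {G G' a b : ℝ → ℝ} {u1 u0 u2 M : ℝ} (H : Hyp G G' a b u1 u0 u2 M) :
    ∃ μ p, Prof G (fun x => a x + μ * b x) u1 u2 p ∧ ∃ Λ, 0 < Λ ∧
      (∀ x ∈ Icc u1 u0, p x ≤ Λ * (x - u1)) ∧ (∀ x ∈ Icc u0 u2, p x ≤ Λ * (u2 - x)) := by
  have h10 := H.h10
  have h02 := H.h02
  have s1 : Icc u1 u0 ⊆ Icc u1 u2 := Icc_subset_Icc le_rfl h02.le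
  have s1' : Ioo u1 u0 ⊆ Ioo u1 u2 := Ioo_subset_Ioo le_rfl h02.le
  have s2 : Icc u0 u2 ⊆ Icc u1 u2 := Icc_subset_Icc h10.le le_rfl
  have s2' : Ioo u0 u2 ⊆ Ioo u1 u2 := Ioo_subset_Ioo h10.le le_rfl
  have hu0 : u0 ∈ Ioo u1 u2 := ⟨h10, h02⟩
  have hu0' := Ioo_subset_Icc_self hu0
  have hGc : ContinuousOn G (Icc u1 u2) := fun x hx => (H.der x hx).continuousAt.continuousWithinAt
  have hAc : ∀ μ : ℝ, ContinuousOn (fun x => a x + μ * b x) (Icc u1 u2) := fun μ =>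
    H.ca.add (continuousOn_const.mul H.cb)
  have hm : ∀ x, x ∈ Icc (-u2) (-u0) → -x ∈ Icc u0 u2 := fun x hx =>
    ⟨by linarith [hx.2], by linarith [hx.1]⟩
  have hm' : ∀ x, x ∈ Ioo (-u2) (-u0) → -x ∈ Ioo u0 u2 := fun x hx =>
    ⟨by linarith [hx.2], by linarith [hx.1]⟩
  obtain ⟨Na, hNa⟩ := isCompact_Icc.exists_bound_of_continuousOn H.ca
  obtain ⟨Nb, hNb⟩ := isCompact_Icc.exists_bound_of_continuousOn H.cb
  have hNb0 : 0 < Nb := lt_of_lt_of_le (H.bp u0 hu0') ((le_abs_self _).trans (hNb u0 hu0'))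
  obtain ⟨xb, hxb, hmin⟩ := isCompact_Icc.exists_isMinOn (⟨u0, hu0'⟩ : (Icc u1 u2).Nonempty) H.cb
  set β := b xb with hβ
  have hβ0 : 0 < β := H.bp xb hxb
  have hβb : ∀ x ∈ Icc u1 u2, β ≤ b x := fun x hx => hmin hx
  have hLex := fun μ : ℝ => left_exists (G := G) (G' := G') (A := fun x => a x + μ * b x) (M := M)
    h10 (hGc.mono s1) ((hAc μ).mono s1) H.gp H.g1 H.g0
    (fun x hx => H.der x (s1 (Ioo_subset_Icc_self hx)))
    (fun x hx => H.bd x (s1 (Ioo_subset_Icc_self hx)))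
  choose P hP hPlip using hLex
  have hRc : ∀ μ : ℝ, ContinuousOn (fun s => -(a (-s) + μ * b (-s))) (Icc (-u2) (-u0)) := fun μ =>
    ((((hAc μ).mono s2).comp continuousOn_neg hm)).neg
  have hRex := fun μ : ℝ => left_exists (G := fun s => -G (-s)) (G' := fun s => G' (-s))
    (A := fun s => -(a (-s) + μ * b (-s))) (M := M) (neg_lt_neg h02)
    (((hGc.mono s2).comp continuousOn_neg hm).neg) (hRc μ)
    (fun s hs => by have := H.gn (-s) (hm' s hs); linarith)
    (by simp [H.g2]) (by simp [H.g0])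
    (fun s hs => by
      have := ((H.der (-s) (s2 (hm s (Ioo_subset_Icc_self hs)))).comp s (hasDerivAt_neg s)).neg
      exact this.congr_deriv (by ring))
    (fun s hs => H.bd (-s) (s2 (hm s (Ioo_subset_Icc_self hs))))
  choose Q hQ hQlip using hRex
  have hGL : ∀ x ∈ Ioo u1 u0, 0 ≤ G x := fun x hx => (H.gp x hx).le
  have hGR : ∀ s ∈ Ioo (-u2) (-u0), 0 ≤ -G (-s) := fun s hs => by
    have := H.gn (-s) (hm' s hs); linarith
  have e0 : u0 ∈ Icc u1 u0 := ⟨h10.le, le_rfl⟩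
  have e0' : -u0 ∈ Icc (-u2) (-u0) := ⟨by linarith, le_rfl⟩
  -- Lipschitz dependence
  have lipP : ∀ μ ν : ℝ, P μ u0 ≤ P ν u0 + |μ - ν| * Nb * (u0 - u1) := by
    intro μ ν
    refine left_cmp (by positivity) hGL (hP μ) (hP ν) (fun x hx => ?_) u0 e0
    have hx' := s1 (Ioo_subset_Icc_self hx)
    have h1 : (μ - ν) * b x ≤ |μ - ν| * Nb :=
      mul_le_mul (le_abs_self _) ((le_abs_self _).trans (hNb x hx')) (H.bp x hx').le (abs_nonneg _)
    linarith
  have lipQ : ∀ μ ν : ℝ, Q μ (-u0) ≤ Q ν (-u0) + |μ - ν| * Nb * (-u0 - -u2) := by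
    intro μ ν
    refine left_cmp (by positivity) hGR (hQ μ) (hQ ν) (fun x hx => ?_) (-u0) e0'
    have hx' := s2 (hm x (Ioo_subset_Icc_self hx))
    have h1 : (ν - μ) * b (-x) ≤ |μ - ν| * Nb := by
      rw [abs_sub_comm]
      exact mul_le_mul (le_abs_self _) ((le_abs_self _).trans (hNb _ hx')) (H.bp _ hx').le (abs_nonneg _)
    linarith
  have contP : Continuous (fun μ => P μ u0) := by
    have : LipschitzWith ⟨Nb * (u0 - u1), mul_nonneg hNb0.le (by linarith)⟩ (fun μ => P μ u0) := by
      apply LipschitzWith.of_le_add_mul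
      intro x y
      have := lipP x y
      rw [Real.dist_eq]
      calc P x u0 ≤ _ := this
        _ = P y u0 + Nb * (u0 - u1) * |x - y| := by ring
    exact this.continuous
  have contQ : Continuous (fun μ => Q μ (-u0)) := by
    have : LipschitzWith ⟨Nb * (u2 - u0), mul_nonneg hNb0.le (by linarith)⟩ (fun μ => Q μ (-u0)) := by
      apply LipschitzWith.of_le_add_mul
      intro x y
      have := lipQ x y
      rw [Real.dist_eq]
      calc Q x (-u0) ≤ _ := this
        _ = Q y (-u0) + Nb * (u2 - u0) * |x - y| := by ring
    exact this.continuous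
  have monP : ∀ μ ν : ℝ, μ ≤ ν → P μ u0 ≤ P ν u0 := by
    intro μ ν h
    have := left_cmp le_rfl hGL (hP μ) (hP ν) (fun x hx => by
      have := H.bp x (s1 (Ioo_subset_Icc_self hx)); nlinarith) u0 e0
    simpa using this
  have monQ : ∀ μ ν : ℝ, μ ≤ ν → Q ν (-u0) ≤ Q μ (-u0) := by
    intro μ ν h
    have := left_cmp le_rfl hGR (hQ ν) (hQ μ) (fun x hx => by
      have := H.bp _ (s2 (hm x (Ioo_subset_Icc_self hx))); nlinarith) (-u0) e0'
    simpa using this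
  have lowP : ∀ μ : ℝ, 0 ≤ μ → (μ * β - Na) * (u0 - u1) ≤ P μ u0 := by
    intro μ hμ
    refine left_lower hGL (hP μ) (fun x hx => ?_) u0 e0
    have hx' := s1 (Ioo_subset_Icc_self hx)
    have h1 := (abs_le.1 (hNa x hx')).1
    have h2 := mul_le_mul_of_nonneg_left (hβb x hx') hμ
    linarith
  have lowQ : ∀ μ : ℝ, μ ≤ 0 → (-μ * β - Na) * (-u0 - -u2) ≤ Q μ (-u0) := by
    intro μ hμ
    refine left_lower hGR (hQ μ) (fun x hx => ?_) (-u0) e0'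
    have hx' := s2 (hm x (Ioo_subset_Icc_self hx))
    have h1 := (abs_le.1 (hNa _ hx')).2
    have h2 := mul_le_mul_of_nonneg_left (hβb _ hx') (neg_nonneg.2 hμ)
    linarith
  obtain ⟨μ, hμ⟩ : ∃ μ, P μ u0 = Q μ (-u0) := by
    obtain ⟨x, hx⟩ : ∃ x, P x u0 - Q x (-u0) ≤ 0 := by
      set X := |P 0 u0 / (u2 - u0) + Na| / β with hX
      have hX0 : 0 ≤ X := by positivity
      refine ⟨-X, ?_⟩
      have h1 := monP (-X) 0 (by linarith)
      have h2 := lowQ (-X) (by linarith)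
      have h3 : X * β = |P 0 u0 / (u2 - u0) + Na| := by rw [hX]; field_simp
      have h4 : P 0 u0 / (u2 - u0) ≤ X * β - Na := by
        rw [h3]; linarith [le_abs_self (P 0 u0 / (u2 - u0) + Na)]
      rw [div_le_iff₀ (by linarith)] at h4
      have : (- -X * β - Na) * (-u0 - -u2) = (X * β - Na) * (u2 - u0) := by ring
      linarith
    obtain ⟨y, hy⟩ : ∃ y, 0 ≤ P y u0 - Q y (-u0) := by
      set X := |Q 0 (-u0) / (u0 - u1) + Na| / β with hX
      have hX0 : 0 ≤ X := by positivity
      refine ⟨X, ?_⟩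
      have h1 := monQ 0 X (by linarith)
      have h2 := lowP X (by linarith)
      have h3 : X * β = |Q 0 (-u0) / (u0 - u1) + Na| := by rw [hX]; field_simp
      have h4 : Q 0 (-u0) / (u0 - u1) ≤ X * β - Na := by
        rw [h3]; linarith [le_abs_self (Q 0 (-u0) / (u0 - u1) + Na)]
      rw [div_le_iff₀ (by linarith)] at h4
      linarith
    obtain ⟨μ, hμ⟩ := mem_range_of_exists_le_of_exists_ge (contP.sub contQ) ⟨x, hx⟩ ⟨y, hy⟩
    exact ⟨μ, sub_eq_zero.1 hμ⟩
  have hpos : 0 < P μ u0 := by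
    rcases le_total 0 (a u0 + μ * b u0) with h | h
    · exact left_pos h10 ((hAc μ).mono s1) H.g0 H.gneg (H.der u0 hu0') hGL (hP μ) h
    · rw [hμ]
      refine left_pos (g := G' u0) (neg_lt_neg h02) (hRc μ) (by simp [H.g0]) H.gneg ?_ hGR (hQ μ) ?_
      · have := ((H.der (- -u0) (by simpa using hu0')).comp (-u0) (hasDerivAt_neg (-u0))).neg
        exact this.congr_deriv (by simp)
      · simp only [neg_neg]; linarith
  obtain ⟨hPc, hP0, hPp, hPd⟩ := hP μ
  obtain ⟨hQc, hQ0, hQp, hQd⟩ := refl_left (A := fun x => a x + μ * b x) (hQ μ)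
  set p : ℝ → ℝ := fun x => if x ≤ u0 then P μ x else Q μ (-x) with hpdef
  have pL : ∀ x, x ≤ u0 → p x = P μ x := fun x hx => if_pos hx
  have pR : ∀ x, u0 ≤ x → p x = Q μ (-x) := fun x hx => by
    rcases eq_or_lt_of_le hx with h | h
    · rw [pL x h.ge, ← h, hμ]
    · exact if_neg (not_le.2 h)
  have cL : ContinuousOn p (Icc u1 u0) := hPc.congr fun x hx => pL x hx.2
  have cR : ContinuousOn p (Icc u0 u2) := hQc.congr fun x hx => pR x hx.1
  have hpc : ContinuousOn p (Icc u1 u2) := by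
    rw [← Icc_union_Icc_eq_Icc h10.le h02.le]
    exact cL.union_of_isClosed cR isClosed_Icc isClosed_Icc
  have hpp : ∀ x ∈ Ioo u1 u2, 0 < p x := by
    intro x hx
    rcases lt_trichotomy x u0 with h | h | h
    · rw [pL x h.le]; exact hPp x ⟨hx.1, h⟩
    · rw [h, pL u0 le_rfl]; exact hpos
    · rw [pR x h.le]; exact hQp x ⟨h, hx.2⟩
  have dL : ∀ x ∈ Ioo u1 u0, HasDerivAt p (G x / p x + (a x + μ * b x)) x := by
    intro x hx
    rw [pL x hx.2.le]
    refine (hPd x hx).congr_of_eventuallyEq ?_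
    filter_upwards [Iio_mem_nhds hx.2] with y hy using pL y (le_of_lt hy)
  have dR : ∀ x ∈ Ioo u0 u2, HasDerivAt p (G x / p x + (a x + μ * b x)) x := by
    intro x hx
    rw [pR x hx.1.le]
    refine (hQd x hx).congr_of_eventuallyEq ?_
    filter_upwards [Ioi_mem_nhds hx.1] with y hy using pR y (le_of_lt hy)
  have hnh : Icc u1 u2 ∈ 𝓝 u0 := Icc_mem_nhds h10 h02
  have hcg : ContinuousAt (fun x => G x / p x + (a x + μ * b x)) u0 :=
    ((hGc.continuousAt hnh).div (hpc.continuousAt hnh) (hpp u0 hu0).ne').add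
      ((hAc μ).continuousAt hnh)
  have d0 : HasDerivAt p (G u0 / p u0 + (a u0 + μ * b u0)) u0 := by
    have A1 : HasDerivWithinAt p (G u0 / p u0 + (a u0 + μ * b u0)) (Iic u0) u0 := by
      apply hasDerivWithinAt_Iic_of_tendsto_deriv (s := Ioo u1 u0)
      · exact fun x hx => (dL x hx).differentiableAt.differentiableWithinAt
      · exact (cL u0 e0).mono Ioo_subset_Icc_self
      · exact Ioo_mem_nhdsLT h10
      · refine (hcg.tendsto.mono_left nhdsWithin_le_nhds).congr' ?_
        filter_upwards [Ioo_mem_nhdsLT h10] with x hx using (dL x hx).deriv.symm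
    have A2 : HasDerivWithinAt p (G u0 / p u0 + (a u0 + μ * b u0)) (Ici u0) u0 := by
      apply hasDerivWithinAt_Ici_of_tendsto_deriv (s := Ioo u0 u2)
      · exact fun x hx => (dR x hx).differentiableAt.differentiableWithinAt
      · exact (cR u0 ⟨le_rfl, h02.le⟩).mono Ioo_subset_Icc_self
      · exact Ioo_mem_nhdsGT h02
      · refine (hcg.tendsto.mono_left nhdsWithin_le_nhds).congr' ?_
        filter_upwards [Ioo_mem_nhdsGT h02] with x hx using (dR x hx).deriv.symm
    have := A1.union A2
    rwa [Iic_union_Ici, hasDerivWithinAt_univ] at this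
  refine ⟨μ, p, ⟨hpc, by rw [pL u1 h10.le, hP0], by rw [pR u2 h02.le, hQ0], hpp, ?_⟩, ?_⟩
  · intro x hx
    rcases lt_trichotomy x u0 with h | h | h
    · exact dL x ⟨hx.1, h⟩
    · rw [h]; exact d0
    · exact dR x ⟨h, hx.2⟩
  · obtain ⟨Λ1, hΛ1⟩ := hPlip μ
    obtain ⟨Λ2, hΛ2⟩ := hQlip μ
    refine ⟨|Λ1| + |Λ2| + 1, by positivity, fun x hx => ?_, fun x hx => ?_⟩
    · rw [pL x hx.2]
      have h1 := hΛ1 u1 ⟨le_rfl, h10.le⟩ x hx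
      have hx1 := sub_nonneg.2 hx.1
      rw [hP0, sub_zero, abs_of_nonneg hx1] at h1
      have h2 : Λ1 * (x - u1) ≤ (|Λ1| + |Λ2| + 1) * (x - u1) :=
        mul_le_mul_of_nonneg_right (by linarith [le_abs_self Λ1, abs_nonneg Λ2]) hx1
      linarith [le_abs_self (P μ x)]
    · rw [pR x hx.1]
      have h1 := hΛ2 (-u2) ⟨le_rfl, by linarith⟩ (-x) ⟨by linarith [hx.2], by linarith [hx.1]⟩
      have hx1 : 0 ≤ u2 - x := sub_nonneg.2 hx.2
      rw [hQ0, sub_zero, show -x - -u2 = u2 - x by ring, abs_of_nonneg hx1] at h1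
      have h2 : Λ2 * (u2 - x) ≤ (|Λ1| + |Λ2| + 1) * (u2 - x) :=
        mul_le_mul_of_nonneg_right (by linarith [le_abs_self Λ2, abs_nonneg Λ1]) hx1
      linarith [le_abs_self (Q μ (-x))]
/-- Abstract traveling-wave system. -/
def Sol (G A : ℝ → ℝ) (u w : ℝ → ℝ) : Prop :=
  (∀ z, HasDerivAt u (w z) z) ∧ ∀ z, HasDerivAt w (G (u z) + A (u z) * w z) z

/-- Heteroclinic boundary conditions. -/
def Het (l r : ℝ) (u w : ℝ → ℝ) : Prop :=
  Tendsto u atBot (𝓝 l) ∧ Tendsto u atTop (𝓝 r) ∧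
  Tendsto w atBot (𝓝 0) ∧ Tendsto w atTop (𝓝 0) ∧ ∀ z, 0 < w z

lemma sol_mem {G A u w : ℝ → ℝ} {l r : ℝ} (hs : Sol G A u w) (hh : Het l r u w) :
    StrictMono u ∧ ∀ z, u z ∈ Ioo l r := by
  obtain ⟨h1, h2, h3, h4, hw⟩ := hh
  have hm : StrictMono u := strictMono_of_hasDerivAt_pos hs.1 hw
  refine ⟨hm, fun z => ⟨?_, ?_⟩⟩
  · exact lt_of_le_of_lt (hm.monotone.le_of_tendsto h1 (z - 1)) (hm (by linarith))
  · exact lt_of_lt_of_le (hm (by linarith : z < z + 1)) (hm.monotone.ge_of_tendsto h2 (z + 1))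

lemma sol_to_prof {G A u w : ℝ → ℝ} {l r : ℝ} (hs : Sol G A u w) (hh : Het l r u w) :
    ∃ p, Prof G A l r p := by
  obtain ⟨hm, hmem⟩ := sol_mem hs hh
  obtain ⟨h1, h2, h3, h4, hw⟩ := hh
  have hlr : l < r := (hmem 0).1.trans (hmem 0).2
  have hcu : Continuous u := continuous_iff_continuousAt.2 fun z => (hs.1 z).continuousAt
  have hsurj : ∀ x, x ∈ Ioo l r → ∃ z, u z = x := by
    intro x hx
    obtain ⟨a, ha⟩ := (h1.eventually (gt_mem_nhds hx.1)).exists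
    obtain ⟨b, hb⟩ := (h2.eventually (lt_mem_nhds hx.2)).exists
    exact mem_range_of_exists_le_of_exists_ge hcu ⟨a, ha.le⟩ ⟨b, hb.le⟩
  choose! Z hZ using hsurj
  have hZu : ∀ z, Z (u z) = z := fun z => hm.injective (hZ _ (hmem z))
  have hZm : MonotoneOn Z (Ioo l r) := by
    intro x hx y hy hxy
    rw [← hm.le_iff_le, hZ x hx, hZ y hy]; exact hxy
  have hZim : Z '' Ioo l r = univ := eq_univ_of_forall fun z => ⟨u z, hmem z, hZu z⟩
  have hZc : ∀ x ∈ Ioo l r, ContinuousAt Z x := fun x hx =>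
    continuousAt_of_monotoneOn_of_image_mem_nhds hZm (Ioo_mem_nhds hx.1 hx.2)
      (by rw [hZim]; exact univ_mem)
  have hZd : ∀ x ∈ Ioo l r, HasDerivAt Z (w (Z x))⁻¹ x := fun x hx =>
    HasDerivAt.of_local_left_inverse (hZc x hx) (hs.1 (Z x)) (hw _).ne' (by
      filter_upwards [Ioo_mem_nhds hx.1 hx.2] with y hy using hZ y hy)
  classical
  set p : ℝ → ℝ := fun x => if x ∈ Ioo l r then w (Z x) else 0 with hp
  have pe : ∀ x ∈ Ioo l r, p x = w (Z x) := fun x hx => if_pos hx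
  have hpd : ∀ x ∈ Ioo l r, HasDerivAt p (G x / p x + A x) x := by
    intro x hx
    have hd := ((hs.2 (Z x)).comp x (hZd x hx))
    have hd' : HasDerivAt (w ∘ Z) (G x / p x + A x) x := hd.congr_deriv (by
      rw [hZ x hx, pe x hx]
      have := (hw (Z x)).ne'
      field_simp)
    refine hd'.congr_of_eventuallyEq ?_
    filter_upwards [Ioo_mem_nhds hx.1 hx.2] with y hy using pe y hy
  have hpl : p l = 0 := if_neg (fun h => lt_irrefl _ h.1)
  have hpr : p r = 0 := if_neg (fun h => lt_irrefl _ h.2)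
  refine ⟨p, ?_, hpl, hpr, fun x hx => by rw [pe x hx]; exact hw _, hpd⟩
  intro x hx
  rcases eq_or_lt_of_le hx.1 with h | h
  · subst h
    have hb : Tendsto Z (𝓝[>] l) atBot := by
      rw [tendsto_atBot]
      intro z0
      filter_upwards [Ioo_mem_nhdsGT (hmem z0).1] with x hx
      have hx' : x ∈ Ioo l r := ⟨hx.1, hx.2.trans (hmem z0).2⟩
      rw [← hm.le_iff_le, hZ x hx']; exact hx.2.le
    have ht : ContinuousWithinAt p (Ioi l) l := by
      unfold ContinuousWithinAt
      rw [hpl]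
      refine (h3.comp hb).congr' ?_
      filter_upwards [Ioo_mem_nhdsGT hlr] with x hx using (pe x hx).symm
    exact (continuousWithinAt_Ioi_iff_Ici.1 ht).mono Icc_subset_Ici_self
  rcases eq_or_lt_of_le hx.2 with h' | h'
  · subst h'
    have hb : Tendsto Z (𝓝[<] x) atTop := by
      rw [tendsto_atTop]
      intro z0
      filter_upwards [Ioo_mem_nhdsLT (hmem z0).2] with y hy
      have hy' : y ∈ Ioo l x := ⟨(hmem z0).1.trans hy.1, hy.2⟩
      rw [← hm.le_iff_le, hZ y hy']; exact hy.1.le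
    have ht : ContinuousWithinAt p (Iio x) x := by
      unfold ContinuousWithinAt
      rw [hpr]
      refine (h4.comp hb).congr' ?_
      filter_upwards [Ioo_mem_nhdsLT hlr] with y hy using (pe y hy).symm
    exact (continuousWithinAt_Iio_iff_Iic.1 ht).mono Icc_subset_Iic_self
  · exact (hpd x ⟨h, h'⟩).continuousAt.continuousWithinAt

lemma prof_to_sol {G A p : ℝ → ℝ} {l m r Λ : ℝ} (hlm : l < m) (hmr : m < r)
    (hP : Prof G A l r p) (hΛ : 0 < Λ) (hb1 : ∀ x ∈ Icc l m, p x ≤ Λ * (x - l))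
    (hb2 : ∀ x ∈ Icc m r, p x ≤ Λ * (r - x)) :
    ∃ u w, Sol G A u w ∧ Het l r u w := by
  obtain ⟨hpc, hpl, hpr, hpp, hpd⟩ := hP
  have hlr := hlm.trans hmr
  have hmm : m ∈ Ioo l r := ⟨hlm, hmr⟩
  have hcinv : ContinuousOn (fun x => (p x)⁻¹) (Ioo l r) :=
    (hpc.mono Ioo_subset_Icc_self).inv₀ fun x hx => (hpp x hx).ne'
  set T : ℝ → ℝ := fun x => ∫ t in m..x, (p t)⁻¹ with hT
  have hTm : T m = 0 := by simp [hT]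
  have hTd : ∀ x ∈ Ioo l r, HasDerivAt T (p x)⁻¹ x := by
    intro x hx
    refine intervalIntegral.integral_hasDerivAt_right ?_ ?_ (hcinv.continuousAt (Ioo_mem_nhds hx.1 hx.2))
    · exact (hcinv.mono (ordConnected_Ioo.uIcc_subset hmm hx)).intervalIntegrable
    · exact hcinv.stronglyMeasurableAtFilter isOpen_Ioo x hx
  have hTc : ContinuousOn T (Ioo l r) := fun x hx => (hTd x hx).continuousAt.continuousWithinAt
  have hTs : StrictMonoOn T (Ioo l r) := by
    apply strictMonoOn_of_deriv_pos (convex_Ioo l r) hTc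
    intro x hx
    rw [interior_Ioo] at hx
    rw [(hTd x hx).deriv]
    exact inv_pos.2 (hpp x hx)
  have hE1 : ∀ z : ℝ, 0 ≤ z → Real.exp (-Λ * z) ≤ 1 := fun z hz =>
    Real.exp_le_one_iff.2 (by nlinarith)
  have hdE : ∀ z : ℝ, HasDerivAt (fun z => Real.exp (-Λ * z)) (Real.exp (-Λ * z) * (-Λ)) z := fun z => by
    have := ((hasDerivAt_id z).const_mul (-Λ)).exp
    simpa using this
  have hup : ∀ z : ℝ, 0 ≤ z → ∃ x ∈ Ioo l r, z ≤ T x := by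
    intro z hz
    have hx : ∀ z : ℝ, 0 ≤ z → r - (r - m) * Real.exp (-Λ * z) ∈ Ico m r := by
      intro z hz
      have h1 := hE1 z hz
      have h2 := Real.exp_pos (-Λ * z)
      constructor <;> nlinarith
    have hx' : ∀ z : ℝ, 0 ≤ z → r - (r - m) * Real.exp (-Λ * z) ∈ Ioo l r := fun z hz =>
      ⟨hlm.trans_le (hx z hz).1, (hx z hz).2⟩
    have hd : ∀ z : ℝ, 0 ≤ z → HasDerivAt (fun z => T (r - (r - m) * Real.exp (-Λ * z)) - z)
        ((p (r - (r - m) * Real.exp (-Λ * z)))⁻¹ * (Λ * (r - (r - (r - m) * Real.exp (-Λ * z)))) - 1) z := by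
      intro z hz
      have h1 := ((hdE z).const_mul (r - m)).const_sub r
      have h2 := ((hTd _ (hx' z hz)).comp z h1).sub (hasDerivAt_id z)
      exact h2.congr_deriv (by ring)
    refine ⟨_, hx' z hz, ?_⟩
    have := comp_nonneg (l := 0) (r := z) (fun t ht => (hd t ht.1).continuousAt.continuousWithinAt)
      (fun t ht => hd t ht.1.le) (by simp [hTm]) (by
        intro t ht _
        have h1 := hpp _ (hx' t ht.1.le)
        have h2 := hb2 _ (Ico_subset_Icc_self (hx t ht.1.le))
        rw [sub_nonneg, inv_mul_eq_div, one_le_div h1]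
        exact h2) z ⟨hz, le_rfl⟩
    linarith
  have hdn : ∀ z : ℝ, 0 ≤ z → ∃ x ∈ Ioo l r, T x ≤ -z := by
    intro z hz
    have hx : ∀ z : ℝ, 0 ≤ z → l + (m - l) * Real.exp (-Λ * z) ∈ Ioc l m := by
      intro z hz
      have h1 := hE1 z hz
      have h2 := Real.exp_pos (-Λ * z)
      constructor <;> nlinarith
    have hx' : ∀ z : ℝ, 0 ≤ z → l + (m - l) * Real.exp (-Λ * z) ∈ Ioo l r := fun z hz =>
      ⟨(hx z hz).1, (hx z hz).2.trans_lt hmr⟩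
    have hd : ∀ z : ℝ, 0 ≤ z → HasDerivAt (fun z => -T (l + (m - l) * Real.exp (-Λ * z)) - z)
        ((p (l + (m - l) * Real.exp (-Λ * z)))⁻¹ * (Λ * ((l + (m - l) * Real.exp (-Λ * z)) - l)) - 1) z := by
      intro z hz
      have h1 := ((hdE z).const_mul (m - l)).const_add l
      have h2 := ((hTd _ (hx' z hz)).comp z h1).neg.sub (hasDerivAt_id z)
      exact h2.congr_deriv (by ring)
    refine ⟨_, hx' z hz, ?_⟩
    have := comp_nonneg (l := 0) (r := z) (fun t ht => (hd t ht.1).continuousAt.continuousWithinAt)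
      (fun t ht => hd t ht.1.le) (by simp [hTm]) (by
        intro t ht _
        have h1 := hpp _ (hx' t ht.1.le)
        have h2 := hb1 _ (Ioc_subset_Icc_self (hx t ht.1.le))
        rw [sub_nonneg, inv_mul_eq_div, one_le_div h1]
        exact h2) z ⟨hz, le_rfl⟩
    linarith
  have hsurj : ∀ z : ℝ, ∃ x ∈ Ioo l r, T x = z := by
    intro z
    obtain ⟨x, hx, hxz⟩ := hdn |z| (abs_nonneg z)
    obtain ⟨y, hy, hyz⟩ := hup |z| (abs_nonneg z)
    exact isPreconnected_Ioo.intermediate_value hx hy hTc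
      ⟨by linarith [neg_abs_le z], by linarith [le_abs_self z]⟩
  choose U hU hTU using hsurj
  have hUT : ∀ x ∈ Ioo l r, U (T x) = x := fun x hx => hTs.injOn (hU _) hx (hTU _)
  have hUm : StrictMono U := fun x y hxy => by
    rw [← hTs.lt_iff_lt (hU x) (hU y), hTU, hTU]; exact hxy
  have hUim : U '' univ = Ioo l r := by
    ext x
    constructor
    · rintro ⟨z, _, rfl⟩; exact hU z
    · exact fun hx => ⟨T x, trivial, hUT x hx⟩
  have hUc : ∀ z, ContinuousAt U z := fun z =>
    continuousAt_of_monotoneOn_of_image_mem_nhds (hUm.monotone.monotoneOn univ) univ_mem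
      (by rw [hUim]; exact Ioo_mem_nhds (hU z).1 (hU z).2)
  have hUd : ∀ z, HasDerivAt U (p (U z)) z := fun z => by
    have := HasDerivAt.of_local_left_inverse (hUc z) (hTd (U z) (hU z))
      (inv_ne_zero (hpp _ (hU z)).ne') (Eventually.of_forall hTU)
    rwa [inv_inv] at this
  have htop : Tendsto U atTop (𝓝 r) := by
    rw [tendsto_order]
    refine ⟨fun a ha => ?_, fun b hb => Eventually.of_forall fun z => (hU z).2.trans hb⟩
    have hx : (max a m + r) / 2 ∈ Ioo l r := by
      have h1 := le_max_right a m
      have h2 : max a m < r := max_lt ha hmr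
      constructor <;> linarith
    filter_upwards [eventually_ge_atTop (T ((max a m + r) / 2))] with z hz
    have h3 := hUm.monotone hz
    rw [hUT _ hx] at h3
    have h1 := le_max_left a m
    have h2 : max a m < r := max_lt ha hmr
    linarith
  have hbot : Tendsto U atBot (𝓝 l) := by
    rw [tendsto_order]
    refine ⟨fun a ha => Eventually.of_forall fun z => ha.trans (hU z).1, fun b hb => ?_⟩
    have hx : (min b m + l) / 2 ∈ Ioo l r := by
      have h1 := min_le_right b m
      have h2 : l < min b m := lt_min hb hlm
      constructor <;> linarith
    filter_upwards [eventually_le_atBot (T ((min b m + l) / 2))] with z hz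
    have h3 := hUm.monotone hz
    rw [hUT _ hx] at h3
    have h1 := min_le_left b m
    have h2 : l < min b m := lt_min hb hlm
    linarith
  refine ⟨U, fun z => p (U z), ⟨hUd, fun z => ?_⟩, hbot, htop, ?_, ?_, fun z => hpp _ (hU z)⟩
  · have := (hpd (U z) (hU z)).comp z (hUd z)
    refine this.congr_deriv ?_
    have := (hpp _ (hU z)).ne'
    field_simp
  · have h1 : Tendsto p (𝓝[Icc l r] l) (𝓝 (p l)) := hpc l ⟨le_rfl, hlr.le⟩
    rw [hpl] at h1
    exact h1.comp (tendsto_nhdsWithin_iff.2 ⟨hbot, Eventually.of_forall fun z => Ioo_subset_Icc_self (hU z)⟩)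
  · have h1 : Tendsto p (𝓝[Icc l r] r) (𝓝 (p r)) := hpc r ⟨hlr.le, le_rfl⟩
    rw [hpr] at h1
    exact h1.comp (tendsto_nhdsWithin_iff.2 ⟨htop, Eventually.of_forall fun z => Ioo_subset_Icc_self (hU z)⟩)

lemma abstract_main {G G' a b : ℝ → ℝ} {u1 u0 u2 M : ℝ} (H : Hyp G G' a b u1 u0 u2 M) :
    ∃ μb : ℝ, ∀ μ : ℝ,
      (∃ u w, Sol G (fun x => a x + μ * b x) u w ∧ Het u1 u2 u w) ↔ μ = μb := by
  obtain ⟨μb, p, hp, Λ, hΛ, hb1, hb2⟩ := prof_exists H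
  refine ⟨μb, fun μ => ⟨?_, ?_⟩⟩
  · rintro ⟨u, w, hs, hh⟩
    obtain ⟨q, hq⟩ := sol_to_prof hs hh
    exact le_antisymm (not_lt.1 (prof_unique_aux H hp hq)) (not_lt.1 (prof_unique_aux H hq hp))
  · rintro rfl
    exact prof_to_sol H.h10 H.h02 hp hΛ hb1 hb2
lemma f_facts {V V' V'' : ℝ → ℝ} {UM K c : ℝ} {uMx umx : ℝ → ℝ}
    (hA1 : A1 V V' V'' UM) (huMx : UMaxHyp V' UM uMx) (humx : UMinHyp V' UM umx)
    (hD1 : (K, c) ∈ D1 V V' UM uMx umx) {u1 u0 u2 : ℝ} (hz : ZerosD1 V K c u1 u0 u2) :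
    0 < K ∧ (∀ u, 0 < u → HasDerivAt (fTV V K c) (fdTV V' K u) u) ∧
    (∀ x ∈ Ioo u1 u0, 0 < fTV V K c x) ∧ (∀ x ∈ Ioo u0 u2, fTV V K c x < 0) ∧
    fdTV V' K u0 < 0 := by
  obtain ⟨hV, hV'c, hV'', hV''c, hV'p, -, -, hUM, hmax, hV''0⟩ := hA1
  obtain ⟨hKl, hKu, hcl, hcu⟩ := hD1
  simp only at hKl hKu hcl hcu
  obtain ⟨hu1, hu10, hu02, hf1, hf0, hf2, -⟩ := hz
  have hV0 : 0 ≤ V' 0 := by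
    have h1 : Tendsto V' (𝓝[>] 0) (𝓝 (V' 0)) := (hV'c 0 (Set.mem_Ici.2 (le_refl (0:ℝ)))).mono Ioi_subset_Ici_self
    refine ge_of_tendsto h1 ?_
    filter_upwards [self_mem_nhdsWithin] with x hx using (hV'p x hx).le
  have hK : 0 < K := lt_of_le_of_lt hV0 hKl
  have hfd : ∀ u, 0 < u → HasDerivAt (fTV V K c) (fdTV V' K u) u := by
    intro u hu
    have h1 : HasDerivAt V (V' u) u := (hV u hu.le).hasDerivAt (Ici_mem_nhds hu)
    have h2 := ((((hasDerivAt_id u).const_mul K).sub h1).sub_const c).div_const K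
    refine h2.congr_deriv ?_
    simp [fdTV]
  have hfc : ContinuousOn (fTV V K c) (Ici 0) := by
    have hVc : ContinuousOn V (Ici 0) := fun x hx => (hV x hx).continuousWithinAt
    unfold fTV
    fun_prop
  obtain ⟨⟨hM0, hMU⟩, hMK⟩ := huMx K hKl hKu
  obtain ⟨hmU, hmK⟩ := humx K hK hKu
  set x := uMx K
  set y := umx K
  -- injectivity
  have hne : ∀ s t, 0 ≤ s → s < t → (t ≤ UM ∨ UM ≤ s) → V' s ≠ V' t := by
    intro s t hs hst hU he
    obtain ⟨ξ, hξ, h0⟩ := exists_hasDerivAt_eq_zero hst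
      (hV'c.mono (fun z hz => hs.trans hz.1)) he
      (fun z hz => hV'' z (hs.trans_lt hz.1))
    have := (hV''0 ξ (hs.trans_lt hξ.1)).1 h0
    rcases hU with h | h
    · linarith [hξ.2]
    · linarith [hξ.1]
  have hinj : ∀ s t, 0 ≤ s → (t ≤ UM ∨ UM ≤ s) → InjOn V' (Icc s t) := by
    intro s t hs hU p hp q hq he
    rcases lt_trichotomy p q with h | h | h
    · refine absurd he (hne p q (hs.trans hp.1) h ?_)
      rcases hU with h' | h'
      · left; linarith [hq.2]
      · right; linarith [hp.1]
    · exact h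
    · refine absurd he.symm (hne q p (hs.trans hq.1) h ?_)
      rcases hU with h' | h'
      · left; linarith [hp.2]
      · right; linarith [hq.1]
  have hmono : StrictMonoOn V' (Icc 0 UM) :=
    ContinuousOn.strictMonoOn_of_injOn_Icc hUM.le (hKl.trans hKu).le
      (hV'c.mono Icc_subset_Ici_self) (hinj 0 UM le_rfl (Or.inl le_rfl))
  have hanti : ∀ X, UM < X → StrictAntiOn V' (Icc UM X) := fun X hX =>
    ContinuousOn.strictAntiOn_of_injOn_Icc hX.le (hmax X (hUM.trans hX))
      (hV'c.mono fun z hz => hUM.le.trans hz.1) (hinj UM X hUM.le (Or.inr le_rfl))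
  have d1 : ∀ t ∈ Ioo 0 x, 0 < fdTV V' K t := by
    intro t ht
    have : V' t < V' x := hmono ⟨ht.1.le, (ht.2.trans hMU).le⟩ ⟨hM0.le, hMU.le⟩ ht.2
    exact div_pos (by linarith) hK
  have d2 : ∀ t ∈ Ioo x y, fdTV V' K t < 0 := by
    intro t ht
    have : K < V' t := by
      rcases le_total t UM with h | h
      · rw [← hMK]; exact hmono ⟨hM0.le, hMU.le⟩ ⟨(hM0.trans ht.1).le, h⟩ ht.1
      · rw [← hmK]; exact hanti y hmU ⟨h, ht.2.le⟩ ⟨hmU.le, le_rfl⟩ ht.2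
    exact div_neg_of_neg_of_pos (by linarith) hK
  have d3 : ∀ t, y < t → 0 < fdTV V' K t := by
    intro t ht
    have : V' t < V' y := hanti t (hmU.trans ht) ⟨hmU.le, ht.le⟩ ⟨(hmU.trans ht).le, le_rfl⟩ ht
    exact div_pos (by linarith) hK
  have hxy : x < y := hMU.trans hmU
  have m1 : StrictMonoOn (fTV V K c) (Icc 0 x) := by
    apply strictMonoOn_of_deriv_pos (convex_Icc _ _) (hfc.mono Icc_subset_Ici_self)
    intro t ht
    rw [interior_Icc] at ht
    rw [(hfd t ht.1).deriv]; exact d1 t ht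
  have m2 : StrictAntiOn (fTV V K c) (Icc x y) := by
    apply strictAntiOn_of_deriv_neg (convex_Icc _ _) (hfc.mono fun z hz => hM0.le.trans hz.1)
    intro t ht
    rw [interior_Icc] at ht
    rw [(hfd t (hM0.trans ht.1)).deriv]; exact d2 t ht
  have hy0 : 0 < y := hM0.trans hxy
  have m3 : StrictMonoOn (fTV V K c) (Ici y) := by
    apply strictMonoOn_of_deriv_pos (convex_Ici _) (hfc.mono fun z hz => hy0.le.trans hz)
    intro t ht
    rw [interior_Ici] at ht
    rw [(hfd t (hy0.trans ht)).deriv]; exact d3 t ht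
  have fx : 0 < fTV V K c x := div_pos (by simp only [cMf] at hcu; linarith) hK
  have fy : fTV V K c y < 0 := by
    have := lt_of_le_of_lt (le_max_right _ _) hcl
    simp only [cmf] at this
    exact div_neg_of_neg_of_pos (by linarith) hK
  have hu0 : 0 < u0 := hu1.trans hu10
  -- location of zeros
  have l1 : u0 < y := by
    by_contra h
    push Not at h
    have := m3 (h : u0 ∈ Ici y) (h.trans hu02.le : u2 ∈ Ici y) hu02
    linarith
  have l2 : x < u0 := by
    by_contra h
    push Not at h
    have := m1 ⟨hu1.le, hu10.le.trans h⟩ ⟨hu0.le, h⟩ hu10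
    linarith
  have l3 : u1 < x := by
    by_contra h
    push Not at h
    have := m2 ⟨h, (hu10.trans l1).le⟩ ⟨l2.le, l1.le⟩ hu10
    linarith
  have l4 : y < u2 := by
    by_contra h
    push Not at h
    have := m2 ⟨l2.le, l1.le⟩ ⟨(l2.trans hu02).le, h⟩ hu02
    linarith
  refine ⟨hK, hfd, ?_, ?_, d2 u0 ⟨l2, l1⟩⟩
  · intro t ht
    rcases le_total t x with h | h
    · have := m1 ⟨hu1.le, l3.le⟩ ⟨(hu1.trans ht.1).le, h⟩ ht.1
      linarith
    · have := m2 ⟨h, (ht.2.trans l1).le⟩ ⟨l2.le, l1.le⟩ ht.2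
      linarith
  · intro t ht
    rcases le_total t y with h | h
    · have := m2 ⟨l2.le, l1.le⟩ ⟨(l2.trans ht.1).le, h⟩ ht.1
      linarith
    · have := m3 (h : t ∈ Ici y) (l4.le : u2 ∈ Ici y) ht.2
      linarith

lemma hyp_of {V V' V'' κ : ℝ → ℝ} {τ UM K c : ℝ} {uMx umx : ℝ → ℝ}
    (hA1 : A1 V V' V'' UM) (hA2 : A2 κ) (hτ : 0 < τ)
    (huMx : UMaxHyp V' UM uMx) (humx : UMinHyp V' UM umx)
    (hD1 : (K, c) ∈ D1 V V' UM uMx umx) {u1 u0 u2 : ℝ} (hz : ZerosD1 V K c u1 u0 u2) :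
    ∃ G' M, Hyp (fun u => g1TV κ τ u * fTV V K c u) G'
        (fun u => g2TV κ τ u * fdTV V' K u) (fun u => g2TV κ τ u) u1 u0 u2 M := by
  obtain ⟨hK, hfd, hfp, hfn, hfd0⟩ := f_facts hA1 huMx humx hD1 hz
  obtain ⟨-, hV'c, -⟩ := hA1
  obtain ⟨hκ, hκp⟩ := hA2
  obtain ⟨hu1, hu10, hu02, hf1, hf0, hf2, -⟩ := hz
  have hpos : ∀ x ∈ Icc u1 u2, 0 < x := fun x hx => hu1.trans_le hx.1
  have hκi : ContDiffOn ℝ 1 (fun u : ℝ => κ (1 / u)) (Ioi 0) := by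
    refine hκ.comp (t := Ioi 0) ?_ ?_
    · exact contDiffOn_const.div contDiffOn_id fun x hx => ne_of_gt hx
    · intro x hx
      have hx' : (0:ℝ) < x := hx
      exact Set.mem_Ioi.2 (one_div_pos.2 hx')
  have hκip : ∀ x, 0 < x → 0 < κ (1 / x) := fun x hx => hκp _ (one_div_pos.2 hx)
  have hg1 : ContDiffOn ℝ 1 (g1TV κ τ) (Ioi 0) := by
    refine contDiffOn_const.div (contDiffOn_const.mul hκi) fun x hx => ?_
    exact (mul_pos hτ (hκip x hx)).ne'
  have hg2 : ContinuousOn (g2TV κ τ) (Ioi 0) := by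
    refine continuousOn_id.div (continuousOn_const.mul hκi.continuousOn) fun x hx => ?_
    have := hκip x hx
    positivity
  have hg1p : ∀ x, 0 < x → 0 < g1TV κ τ x := fun x hx => by
    have := hκip x hx
    unfold g1TV; positivity
  have hg2p : ∀ x, 0 < x → 0 < g2TV κ τ x := fun x hx => by
    have := hκip x hx
    unfold g2TV; positivity
  have hg1c' : ContinuousOn (deriv (g1TV κ τ)) (Ioi 0) :=
    hg1.continuousOn_deriv_of_isOpen isOpen_Ioi le_rfl
  have hg1d : ∀ x, 0 < x → HasDerivAt (g1TV κ τ) (deriv (g1TV κ τ) x) x := fun x hx =>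
    ((hg1.differentiableOn one_ne_zero).differentiableAt (Ioi_mem_nhds hx)).hasDerivAt
  have hfc : ContinuousOn (fTV V K c) (Ioi 0) := fun x hx =>
    (hfd x hx).continuousAt.continuousWithinAt
  have hfdc : ContinuousOn (fdTV V' K) (Ioi 0) := by
    have := hV'c.mono (Ioi_subset_Ici_self (a := (0:ℝ)))
    unfold fdTV
    fun_prop
  have hsub : Icc u1 u2 ⊆ Ioi 0 := hpos
  have hG'c : ContinuousOn (fun x => deriv (g1TV κ τ) x * fTV V K c x + g1TV κ τ x * fdTV V' K x)
      (Icc u1 u2) :=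
    ((hg1c'.mul hfc).add (hg1.continuousOn.mul hfdc)).mono hsub
  obtain ⟨M, hM⟩ := isCompact_Icc.exists_bound_of_continuousOn hG'c
  have hu0 : 0 < u0 := hu1.trans hu10
  refine ⟨_, M, hu10, hu02, fun x hx => (hg1d x (hpos x hx)).mul (hfd x (hpos x hx)),
    fun x hx => (le_abs_self _).trans (hM x hx), by simp [hf1], by simp [hf0], by simp [hf2],
    ?_, ?_, ?_, (hg2.mul hfdc).mono hsub, hg2.mono hsub, fun x hx => hg2p x (hpos x hx)⟩
  · simp only [hf0, mul_zero, zero_add]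
    exact mul_neg_of_pos_of_neg (hg1p u0 hu0) hfd0
  · exact fun x hx => mul_pos (hg1p x (hu1.trans hx.1)) (hfp x hx)
  · exact fun x hx => mul_neg_of_pos_of_neg (hg1p x (hu0.trans hx.1)) (hfn x hx)

lemma Hyp.neg_a {G G' a b : ℝ → ℝ} {u1 u0 u2 M : ℝ} (H : Hyp G G' a b u1 u0 u2 M) :
    Hyp G G' (fun x => -a x) b u1 u0 u2 M :=
  { H with ca := H.ca.neg }

end

theorem stmt0
    (V V' V'' κ : ℝ → ℝ) (τ UM K c K₁ : ℝ) (uMx umx : ℝ → ℝ)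
    (hA1 : A1 V V' V'' UM) (hA2 : A2 κ) (hτ : 0 < τ) (hK : K ≠ 0)
    (huMx : UMaxHyp V' UM uMx) (humx : UMinHyp V' UM umx)
    (hK1 : K1Hyp V V' UM umx K₁)
    (hD1 : (K, c) ∈ D1 V V' UM uMx umx)
    (u1 u0 u2 : ℝ) (hz : ZerosD1 V K c u1 u0 u2) :
    (∃ μb : ℝ, ∀ μ : ℝ, HasHE1 V V' κ τ K c μ u1 u2 ↔ μ = μb) ∧
    (∃ μf : ℝ, ∀ μ : ℝ, HasHE2 V V' κ τ K c μ u1 u2 ↔ μ = μf) := by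
  obtain ⟨G', M, H⟩ := hyp_of hA1 hA2 hτ huMx humx hD1 hz
  have hu1 : 0 < u1 := hz.1
  constructor
  · obtain ⟨μb, hμb⟩ := abstract_main H
    refine ⟨μb, fun μ => Iff.trans ?_ (hμb μ)⟩
    constructor
    · rintro ⟨u, w, ⟨h1, h2⟩, -, hh⟩
      refine ⟨u, w, ⟨h1, fun z => (h2 z).congr_deriv ?_⟩, hh⟩
      simp only [hTV]; ring
    · rintro ⟨u, w, hs, hh⟩
      refine ⟨u, w, ⟨hs.1, fun z => (hs.2 z).congr_deriv ?_⟩,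
        fun z => hu1.trans ((sol_mem hs hh).2 z).1, hh⟩
      simp only [hTV]; ring
  · obtain ⟨μb, hμb⟩ := abstract_main H.neg_a
    refine ⟨-μb, fun μ => Iff.trans ?_ ((hμb (-μ)).trans neg_eq_iff_eq_neg)⟩
    constructor
    · rintro ⟨u, w, ⟨h1, h2⟩, -, hb, ht, hwb, hwt, hw⟩
      refine ⟨fun z => u (-z), fun z => -w (-z), ⟨fun z => ?_, fun z => ?_⟩,
        ht.comp tendsto_neg_atBot_atTop, hb.comp tendsto_neg_atTop_atBot, ?_, ?_, fun z => ?_⟩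
      · exact ((h1 (-z)).comp z (hasDerivAt_neg z)).congr_deriv (by ring)
      · refine ((h2 (-z)).comp z (hasDerivAt_neg z)).neg.congr_deriv ?_
        simp only [hTV]; ring
      · simpa using (hwt.comp tendsto_neg_atBot_atTop).neg
      · simpa using (hwb.comp tendsto_neg_atTop_atBot).neg
      · have := hw (-z); linarith
    · rintro ⟨u, w, hs, hh⟩
      have hmem := (sol_mem hs hh).2
      obtain ⟨hb, ht, hwb, hwt, hw⟩ := hh
      refine ⟨fun z => u (-z), fun z => -w (-z), ⟨fun z => ?_, fun z => ?_⟩,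
        fun z => hu1.trans (hmem (-z)).1,
        ht.comp tendsto_neg_atBot_atTop, hb.comp tendsto_neg_atTop_atBot, ?_, ?_, fun z => ?_⟩
      · exact ((hs.1 (-z)).comp z (hasDerivAt_neg z)).congr_deriv (by ring)
      · refine ((hs.2 (-z)).comp z (hasDerivAt_neg z)).neg.congr_deriv ?_
        simp only [hTV]; ring
      · simpa using (hwt.comp tendsto_neg_atBot_atTop).neg
      · simpa using (hwb.comp tendsto_neg_atTop_atBot).neg
      · have := hw (-z); linarith


end TrafficTW
end
end

section
/- If (K,c) ∉ D₁ ∪ D₂ (with K ≠ 0), then for every μ ∈ ℝ and every ū > 0 with f(ū) = 0, the system (TV) has no solution (u,w) with u(z) > 0 for all z ∈ ℝ satisfying condition (HO) with level ū. -/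
open Set Filter MeasureTheory

noncomputable section

namespace TrafficTW

/-! ### Calculus lemmas -/

lemma localMax_snd {u w a : ℝ → ℝ} {z : ℝ} (hu : ∀ z, HasDerivAt u (w z) z)
    (hw : ∀ z, HasDerivAt w (a z) z) (hz : IsLocalMax u z) : a z ≤ 0 := by
  by_contra! h
  have hd : deriv u = w := funext fun z => (hu z).deriv
  have hmin : IsLocalMin u z := by
    apply isLocalMin_of_deriv_deriv_pos
    · rw [hd, (hw z).deriv]; exact h
    · exact hz.deriv_eq_zero
    · exact (hu z).continuousAt
  have hev : u =ᶠ[nhds z] fun _ => u z := by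
    filter_upwards [hz, hmin] with x h1 h2 using le_antisymm h1 h2
  have h2 : w =ᶠ[nhds z] fun _ => 0 := by
    filter_upwards [hev.eventuallyEq_nhds] with x hx
    have := hx.deriv_eq
    rw [(hu x).deriv] at this
    simpa using this
  have h3 := h2.deriv_eq
  rw [(hw z).deriv] at h3
  simp at h3
  linarith

/-- Existence of a maximum above the common limit. -/
lemma exists_max {u : ℝ → ℝ} {ub : ℝ} (hc : Continuous u) (hb : Tendsto u atBot (nhds ub))
    (ht : Tendsto u atTop (nhds ub)) {z0 : ℝ} (h0 : ub < u z0) :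
    ∃ z, ∀ y, u y ≤ u z := by
  apply hc.exists_forall_ge' z0
  rw [cocompact_eq_atBot_atTop, eventually_sup]
  exact ⟨(hb.eventually_lt_const h0).mono fun _ h => h.le,
    (ht.eventually_lt_const h0).mono fun _ h => h.le⟩

/-- The basic one-sided lemma at `-∞`. -/
lemma bot_const {u w A B : ℝ → ℝ} {ub : ℝ} (hu : ∀ z, HasDerivAt u (w z) z)
    (hw : ∀ z, HasDerivAt w (A z + B z * w z) z)
    (hub : Tendsto u atBot (nhds ub)) (hwb : Tendsto w atBot (nhds 0))
    (hA : ∀ᶠ z in atBot, A z ≤ 0) (hB : ∀ᶠ z in atBot, B z ≤ 0)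
    (hge : ∀ z, ub ≤ u z) : ∀ᶠ z in atBot, u z = ub := by
  obtain ⟨Z, hZ⟩ := eventually_atBot.1 (hA.and hB)
  have hwneg : ∀ z0, z0 ≤ Z → w z0 ≤ 0 := by
    intro z0 hz0
    by_contra! hpos
    obtain ⟨z1, hz1, hz1'⟩ := ((hwb.eventually_lt_const (half_pos hpos)).and
      (eventually_le_atBot z0)).exists
    have hwc : Continuous w := continuous_iff_continuousAt.2 fun z => (hw z).continuousAt
    set S := Icc z1 z0 ∩ {z | w z ≤ w z0 / 2} with hS
    have hScl : IsCompact S :=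
      isCompact_Icc.inter_right (isClosed_le hwc continuous_const)
    have hSne : S.Nonempty := ⟨z1, ⟨le_refl _, hz1'⟩, hz1.le⟩
    have hs := hScl.sSup_mem hSne
    set s := sSup S
    have habove : ∀ z, s < z → z ≤ z0 → w z0 / 2 < w z := by
      intro z h1 h2
      by_contra! h3
      have : z ∈ S := ⟨⟨hs.1.1.trans h1.le, h2⟩, h3⟩
      exact absurd (le_csSup hScl.bddAbove this) (not_le.2 h1)
    have hanti : AntitoneOn w (Icc s z0) := by
      apply antitoneOn_of_hasDerivWithinAt_nonpos (convex_Icc _ _) hwc.continuousOn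
        (f' := fun z => A z + B z * w z) (fun z _ => (hw z).hasDerivWithinAt)
      intro z hz
      rw [interior_Icc] at hz
      have h1 := hZ z (hz.2.le.trans hz0)
      have h2 := habove z hz.1 hz.2.le
      nlinarith [h1.1, h1.2]
    have := hanti ⟨le_refl _, hs.1.2⟩ ⟨hs.1.2, le_refl _⟩ hs.1.2
    have h4 : w s ≤ w z0 / 2 := hs.2
    linarith
  have huanti : AntitoneOn u (Iic Z) := by
    apply antitoneOn_of_hasDerivWithinAt_nonpos (convex_Iic _)
      (fun z _ => (hu z).continuousAt.continuousWithinAt)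
      (fun z _ => (hu z).hasDerivWithinAt)
    intro z hz
    rw [interior_Iic] at hz
    exact hwneg z (le_of_lt hz)
  filter_upwards [eventually_le_atBot Z] with z hz
  refine le_antisymm ?_ (hge z)
  apply ge_of_tendsto hub
  filter_upwards [eventually_le_atBot z] with y hy
  exact huanti (hy.trans hz) hz hy

/-- Either sign of `B`, combining both ends. -/
lemma ends_const {u w A B : ℝ → ℝ} {ub : ℝ} (hu : ∀ z, HasDerivAt u (w z) z)
    (hw : ∀ z, HasDerivAt w (A z + B z * w z) z)
    (hub : Tendsto u atBot (nhds ub)) (hwb : Tendsto w atBot (nhds 0))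
    (hut : Tendsto u atTop (nhds ub)) (hwt : Tendsto w atTop (nhds 0))
    (hA : ∀ᶠ z in atBot, A z ≤ 0) (hA' : ∀ᶠ z in atTop, A z ≤ 0)
    (hB : (∀ᶠ z in atBot, B z ≤ 0) ∨ (∀ᶠ z in atTop, 0 ≤ B z))
    (hge : ∀ z, ub ≤ u z) : ∃ Z, ∀ᶠ z in nhds Z, u z = ub := by
  rcases hB with hB | hB
  · obtain ⟨Z, hZ⟩ := eventually_atBot.1 (bot_const hu hw hub hwb hA hB hge)
    exact ⟨Z - 1, (eventually_lt_nhds (sub_one_lt Z)).mono fun z hz => hZ z hz.le⟩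
  · have h := bot_const (u := fun z => u (-z)) (w := fun z => - w (-z))
      (A := fun z => A (-z)) (B := fun z => - B (-z)) (ub := ub)
      (fun z => by
        exact ((hu (-z)).comp z (hasDerivAt_neg z)).congr_deriv (by ring))
      (fun z => by
        exact (((hw (-z)).comp z (hasDerivAt_neg z)).fun_neg).congr_deriv (by ring))
      (hut.comp tendsto_neg_atBot_atTop)
      (by simpa using (hwt.comp tendsto_neg_atBot_atTop).neg)
      (tendsto_neg_atBot_atTop.eventually hA')
      ((tendsto_neg_atBot_atTop.eventually hB).mono fun z hz => by simpa using hz)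
      (fun z => hge _)
    obtain ⟨Z, hZ⟩ := eventually_atBot.1 h
    refine ⟨-Z + 1, (eventually_gt_nhds (lt_add_one (-Z))).mono fun z hz => ?_⟩
    have := hZ (-z) (by linarith)
    simpa using this

/-! ### Uniqueness of equilibria -/

lemma contDiffAt_of_deriv {f f' : ℝ → ℝ} (h : ∀ u ∈ Ioi (0:ℝ), HasDerivAt f (f' u) u)
    (hc : ContinuousOn f' (Ioi 0)) {x : ℝ} (hx : 0 < x) : ContDiffAt ℝ 1 f x := by
  have : ContDiffOn ℝ (0 + 1) f (Ioi 0) := by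
    rw [contDiffOn_succ_iff_deriv_of_isOpen isOpen_Ioi]
    refine ⟨fun u hu => (h u hu).differentiableAt.differentiableWithinAt, by simp, ?_⟩
    rw [contDiffOn_zero]
    exact hc.congr fun u hu => (h u hu).deriv
  simpa using this.contDiffAt (Ioi_mem_nhds hx)

lemma V_hasDerivAt {V V' V'' : ℝ → ℝ} {UM : ℝ} (hA1 : A1 V V' V'' UM) :
    ∀ u ∈ Ioi (0:ℝ), HasDerivAt V (V' u) u := fun u hu =>
  (hA1.1 u (mem_Ici.2 (le_of_lt hu))).hasDerivAt (Ici_mem_nhds hu)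

lemma equilibrium_const {V V' V'' κ : ℝ → ℝ} {τ UM K c μ : ℝ}
    (hA1 : A1 V V' V'' UM) (hA2 : A2 κ) (hτ : 0 < τ) {u w : ℝ → ℝ}
    (hsol : IsTVSol V V' κ τ K c μ u w) {us : ℝ} (hus : 0 < us) (hf : fTV V K c us = 0)
    {z0 : ℝ} (h1 : u z0 = us) (h2 : w z0 = 0) : ∀ z, u z = us ∧ w z = 0 := by
  have hV : ContDiffAt ℝ 1 V us := contDiffAt_of_deriv (V_hasDerivAt hA1)
    (hA1.2.1.mono Ioi_subset_Ici_self) hus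
  have hV' : ContDiffAt ℝ 1 V' us := contDiffAt_of_deriv hA1.2.2.1 hA1.2.2.2.1 hus
  have hinv : (0:ℝ) < 1 / us := by positivity
  have hκ : ContDiffAt ℝ 1 κ (1 / us) := hA2.1.contDiffAt (Ioi_mem_nhds hinv)
  have hκp := hA2.2 _ hinv
  have hk : ContDiffAt ℝ 1 (fun x : ℝ => κ (1 / x)) us :=
    ContDiffAt.comp us (g := κ) (f := fun x : ℝ => 1 / x) hκ
      (contDiffAt_const.div contDiffAt_id hus.ne')
  have hg1 : ContDiffAt ℝ 1 (g1TV κ τ) us := by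
    unfold g1TV
    exact contDiffAt_const.div (contDiffAt_const.mul hk) (by positivity)
  have hg2 : ContDiffAt ℝ 1 (g2TV κ τ) us := by
    unfold g2TV
    exact contDiffAt_id.div (contDiffAt_const.mul hk) (by positivity)
  have hff : ContDiffAt ℝ 1 (fTV V K c) us := by
    unfold fTV
    exact (((contDiffAt_const.mul contDiffAt_id).sub hV).sub contDiffAt_const).div_const _
  have hh : ContDiffAt ℝ 1 (hTV V' K μ) us := by
    unfold hTV fdTV
    exact ((contDiffAt_const.sub hV').div_const _).add contDiffAt_const
  let v : ℝ × ℝ → ℝ × ℝ := fun p =>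
    (p.2, g1TV κ τ p.1 * fTV V K c p.1 + g2TV κ τ p.1 * hTV V' K μ p.1 * p.2)
  have hfst : ContDiffAt ℝ 1 (Prod.fst : ℝ × ℝ → ℝ) (us, 0) := contDiffAt_fst
  have hsnd : ContDiffAt ℝ 1 (Prod.snd : ℝ × ℝ → ℝ) (us, 0) := contDiffAt_snd
  have hv : ContDiffAt ℝ 1 v (us, 0) := by
    refine hsnd.prodMk (ContDiffAt.add (ContDiffAt.mul ?_ ?_) ((ContDiffAt.mul ?_ ?_).mul hsnd))
    · exact ContDiffAt.comp (us, (0:ℝ)) (g := g1TV κ τ) hg1 hfst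
    · exact ContDiffAt.comp (us, (0:ℝ)) (g := fTV V K c) hff hfst
    · exact ContDiffAt.comp (us, (0:ℝ)) (g := g2TV κ τ) hg2 hfst
    · exact ContDiffAt.comp (us, (0:ℝ)) (g := hTV V' K μ) hh hfst
  obtain ⟨L, t, ht, hL⟩ := hv.exists_lipschitzOnWith
  have hder : ∀ z, HasDerivAt (fun z => (u z, w z)) (v (u z, w z)) z := fun z =>
    (hsol.1 z).prodMk (hsol.2 z)
  have hcont : Continuous fun z => (u z, w z) :=
    continuous_iff_continuousAt.2 fun z => (hder z).continuousAt
  have hv0 : v (us, 0) = 0 := by simp [v, hf]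
  let T : Set ℝ := {z | (u z, w z) = (us, 0)}
  have hTclosed : IsClosed T := isClosed_eq hcont continuous_const
  have hTopen : IsOpen T := by
    rw [isOpen_iff_mem_nhds]
    intro z hz
    have hz' : (u z, w z) = (us, 0) := hz
    have := ODE_solution_unique_of_eventually (v := fun _ => v) (s := fun _ => t) (K := L)
      (f := fun z => (u z, w z)) (g := fun _ => (us, (0:ℝ))) (t₀ := z)
      (Eventually.of_forall fun _ => hL)
      (by
        have : ∀ᶠ y in nhds z, (u y, w y) ∈ t := hcont.continuousAt.eventually_mem
          (by rw [hz']; exact ht)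
        exact this.mono fun y hy => ⟨hder y, hy⟩)
      (Eventually.of_forall fun y => ⟨by rw [hv0]; exact hasDerivAt_const _ _,
        mem_of_mem_nhds ht⟩) hz'
    exact this
  have hT : T = univ := IsClopen.eq_univ ⟨hTclosed, hTopen⟩ ⟨z0, by simp [T, h1, h2]⟩
  intro z
  have : z ∈ T := hT ▸ mem_univ z
  simpa [T] using this

/-! ### Shape of `V'` -/

lemma V'_mono {V V' V'' : ℝ → ℝ} {UM : ℝ} (hA1 : A1 V V' V'' UM) :
    StrictMonoOn V' (Icc 0 UM) := by
  obtain ⟨-, hc, hd, -, -, -, -, hUM, hmax, hz⟩ := hA1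
  have hcI : ContinuousOn V' (Icc 0 UM) := hc.mono Icc_subset_Ici_self
  have hd' : ∀ x ∈ interior (Icc 0 UM), HasDerivWithinAt V' (V'' x) (interior (Icc 0 UM)) x := by
    intro x hx
    rw [interior_Icc] at hx
    exact (hd x hx.1).hasDerivWithinAt
  rcases hasDerivWithinAt_forall_lt_or_forall_gt_of_forall_ne (convex_Icc 0 UM).interior hd'
    (m := 0) (by
      intro x hx h
      rw [interior_Icc] at hx
      exact hx.2.ne ((hz x hx.1).1 h)) with h | h
  · have := strictAntiOn_of_hasDerivWithinAt_neg (convex_Icc 0 UM) hcI hd' h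
    have h2 := this (a := UM / 2) (b := UM) ⟨by linarith, by linarith⟩
      ⟨by linarith, le_refl _⟩ (by linarith)
    linarith [hmax (UM / 2) (by linarith)]
  · exact strictMonoOn_of_hasDerivWithinAt_pos (convex_Icc 0 UM) hcI hd' h

lemma V'_anti {V V' V'' : ℝ → ℝ} {UM : ℝ} (hA1 : A1 V V' V'' UM) :
    StrictAntiOn V' (Ici UM) := by
  obtain ⟨-, hc, hd, -, -, -, -, hUM, hmax, hz⟩ := hA1
  have hcI : ContinuousOn V' (Ici UM) := hc.mono (Ici_subset_Ici.2 hUM.le)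
  have hd' : ∀ x ∈ interior (Ici UM), HasDerivWithinAt V' (V'' x) (interior (Ici UM)) x := by
    intro x hx
    rw [interior_Ici] at hx
    exact (hd x (hUM.trans hx)).hasDerivWithinAt
  rcases hasDerivWithinAt_forall_lt_or_forall_gt_of_forall_ne (convex_Ici UM).interior hd'
    (m := 0) (by
      intro x hx h
      rw [interior_Ici] at hx
      exact (ne_of_gt hx) ((hz x (hUM.trans hx)).1 h)) with h | h
  · exact strictAntiOn_of_hasDerivWithinAt_neg (convex_Ici UM) hcI hd' h
  · have := strictMonoOn_of_hasDerivWithinAt_pos (convex_Ici UM) hcI hd' h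
    have h2 := this (a := UM) (b := UM + 1) (mem_Ici.2 le_rfl) (by simp) (by linarith)
    linarith [hmax (UM + 1) (by linarith)]

/-- The numerator of `f`. -/
def FTV (V : ℝ → ℝ) (K c u : ℝ) : ℝ := K * u - V u - c

lemma F_cont {V V' V'' : ℝ → ℝ} {UM : ℝ} (hA1 : A1 V V' V'' UM) (K c : ℝ) :
    ContinuousOn (FTV V K c) (Ici 0) := by
  have : ContinuousOn V (Ici 0) := fun u hu => (hA1.1 u hu).continuousWithinAt
  unfold FTV
  fun_prop

lemma F_deriv {V V' V'' : ℝ → ℝ} {UM : ℝ} (hA1 : A1 V V' V'' UM) (K c : ℝ) {u : ℝ}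
    (hu : 0 < u) : HasDerivAt (FTV V K c) (K - V' u) u := by
  unfold FTV
  have := (((hasDerivAt_id u).const_mul K).sub (V_hasDerivAt hA1 u hu)).sub_const c
  simpa using this

lemma F_mono {V V' V'' : ℝ → ℝ} {UM : ℝ} (hA1 : A1 V V' V'' UM) (K c : ℝ) {s : Set ℝ}
    (hs : Convex ℝ s) (hs0 : s ⊆ Ici 0) (h : ∀ u ∈ interior s, V' u < K) :
    StrictMonoOn (FTV V K c) s := by
  have h0 : ∀ x ∈ interior s, 0 < x := fun x hx => by
    have := interior_mono hs0 hx
    rwa [interior_Ici] at this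
  exact strictMonoOn_of_hasDerivWithinAt_pos hs ((F_cont hA1 K c).mono hs0)
    (fun x hx => (F_deriv hA1 K c (h0 x hx)).hasDerivWithinAt)
    (fun x hx => by linarith [h x hx])

lemma F_anti {V V' V'' : ℝ → ℝ} {UM : ℝ} (hA1 : A1 V V' V'' UM) (K c : ℝ) {s : Set ℝ}
    (hs : Convex ℝ s) (hs0 : s ⊆ Ici 0) (h : ∀ u ∈ interior s, K < V' u) :
    StrictAntiOn (FTV V K c) s := by
  have h0 : ∀ x ∈ interior s, 0 < x := fun x hx => by
    have := interior_mono hs0 hx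
    rwa [interior_Ici] at this
  exact strictAntiOn_of_hasDerivWithinAt_neg hs ((F_cont hA1 K c).mono hs0)
    (fun x hx => (F_deriv hA1 K c (h0 x hx)).hasDerivWithinAt)
    (fun x hx => by linarith [h x hx])

/-- The three possible sign patterns of `f` around an equilibrium. -/
def Pattern (V V' : ℝ → ℝ) (K c ub : ℝ) : Prop :=
  ((∀ u, ub < u → 0 ≤ fTV V K c u) ∧ (∀ u, 0 < u → u < ub → fTV V K c u ≤ 0)) ∨
  (0 < K ∧ V' ub = K ∧ (∀ u, ub < u → 0 ≤ fTV V K c u) ∧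
    ∃ a < ub, ∀ u, a < u → u ≤ ub → K ≤ V' u ∧ 0 ≤ fTV V K c u) ∨
  (0 < K ∧ V' ub = K ∧ (∀ u, 0 < u → u < ub → fTV V K c u ≤ 0) ∧
    ∃ b > ub, ∀ u, ub ≤ u → u < b → K ≤ V' u ∧ fTV V K c u ≤ 0)

lemma pattern_of_pos {V V' : ℝ → ℝ} {K c ub : ℝ} (hK : 0 < K)
    (h : ((∀ u, ub < u → 0 ≤ FTV V K c u) ∧ (∀ u, 0 < u → u < ub → FTV V K c u ≤ 0)) ∨
  (V' ub = K ∧ (∀ u, ub < u → 0 ≤ FTV V K c u) ∧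
    ∃ a < ub, ∀ u, a < u → u ≤ ub → K ≤ V' u ∧ 0 ≤ FTV V K c u) ∨
  (V' ub = K ∧ (∀ u, 0 < u → u < ub → FTV V K c u ≤ 0) ∧
    ∃ b > ub, ∀ u, ub ≤ u → u < b → K ≤ V' u ∧ FTV V K c u ≤ 0)) : Pattern V V' K c ub := by
  have e : ∀ u, fTV V K c u = FTV V K c u / K := fun u => rfl
  have e1 : ∀ u, 0 ≤ FTV V K c u → 0 ≤ fTV V K c u := fun u h => div_nonneg h hK.le
  have e2 : ∀ u, FTV V K c u ≤ 0 → fTV V K c u ≤ 0 := fun u h =>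
    div_nonpos_of_nonpos_of_nonneg h hK.le
  rcases h with ⟨h1, h2⟩ | ⟨h0, h1, a, ha, h2⟩ | ⟨h0, h1, a, ha, h2⟩
  · exact Or.inl ⟨fun u hu => e1 u (h1 u hu), fun u hu hu' => e2 u (h2 u hu hu')⟩
  · exact Or.inr (Or.inl ⟨hK, h0, fun u hu => e1 u (h1 u hu), a, ha,
      fun u hu hu' => ⟨(h2 u hu hu').1, e1 u (h2 u hu hu').2⟩⟩)
  · exact Or.inr (Or.inr ⟨hK, h0, fun u hu hu' => e2 u (h1 u hu hu'), a, ha,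
      fun u hu hu' => ⟨(h2 u hu hu').1, e2 u (h2 u hu hu').2⟩⟩)

lemma pattern {V V' V'' : ℝ → ℝ} {UM K c K₁ : ℝ} {uMx umx : ℝ → ℝ}
    (hA1 : A1 V V' V'' UM) (hK : K ≠ 0)
    (huMx : UMaxHyp V' UM uMx) (humx : UMinHyp V' UM umx)
    (hK1 : K1Hyp V V' UM umx K₁)
    (hD : (K, c) ∉ D1 V V' UM uMx umx ∪ D2 V V' umx K₁) {ub : ℝ} (hub : 0 < ub)
    (hf : fTV V K c ub = 0) : Pattern V V' K c ub := by
  have hmono := V'_mono hA1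
  have hanti := V'_anti hA1
  have hUM : 0 < UM := hA1.2.2.2.2.2.2.2.1
  have hpos := hA1.2.2.2.2.1
  have hF : FTV V K c ub = 0 := by
    have : FTV V K c ub / K = 0 := hf
    rcases div_eq_zero_iff.1 this with h | h
    · exact h
    · exact absurd h hK
  have hlt : ∀ u, 0 < u → u ≠ UM → V' u < V' UM := by
    intro u hu hne
    rcases lt_or_gt_of_ne hne with h | h
    · exact hmono ⟨hu.le, h.le⟩ ⟨hUM.le, le_refl _⟩ h
    · exact hanti (le_refl UM) h.le h
  rcases lt_or_gt_of_ne hK with hKn | hKp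
  · -- `K < 0`
    have ha : StrictAntiOn (FTV V K c) (Ici 0) := F_anti hA1 K c (convex_Ici 0) subset_rfl (by
      intro u hu
      rw [interior_Ici] at hu
      linarith [hpos u hu])
    refine Or.inl ⟨fun u hu => ?_, fun u hu hu' => ?_⟩
    · have := ha hub.le (hub.trans hu).le hu
      exact div_nonneg_of_nonpos (by rw [hF] at this; exact this.le) hKn.le
    · have := ha hu.le hub.le hu'
      exact div_nonpos_of_nonneg_of_nonpos (by rw [hF] at this; exact this.le) hKn.le
  apply pattern_of_pos hKp
  rcases le_or_gt (V' UM) K with hKM | hKM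
  · -- `K ≥ K_M`
    have m1 : StrictMonoOn (FTV V K c) (Icc 0 UM) :=
      F_mono hA1 K c (convex_Icc 0 UM) Icc_subset_Ici_self (by
        intro u hu
        rw [interior_Icc] at hu
        linarith [hlt u hu.1 hu.2.ne])
    have m2 : StrictMonoOn (FTV V K c) (Ici UM) :=
      F_mono hA1 K c (convex_Ici UM) (Ici_subset_Ici.2 hUM.le) (by
        intro u hu
        rw [interior_Ici] at hu
        linarith [hlt u (hUM.trans hu) (ne_of_gt hu)])
    have m3 : StrictMonoOn (FTV V K c) (Ici 0) := by
      have := m1.union m2 (c := UM) ⟨⟨hUM.le, le_refl _⟩, fun x hx => hx.2⟩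
        ⟨le_refl UM, fun x hx => hx⟩
      rwa [Icc_union_Ici_eq_Ici hUM.le] at this
    refine Or.inl ⟨fun u hu => ?_, fun u hu hu' => ?_⟩
    · have := m3 hub.le (hub.trans hu).le hu
      linarith
    · have := m3 hu.le hub.le hu'
      linarith
  -- `0 < K < K_M`
  obtain ⟨hm, hVm⟩ := humx K hKp hKM
  set m := umx K with hmdef
  have hcm : FTV V K c m = cmf V umx K - c := rfl
  have hc0 : FTV V K c 0 = c0v V - c := by simp [FTV, c0v]
  have hm0 : 0 < m := hUM.trans hm
  have hVl : ∀ u, UM ≤ u → u < m → K < V' u := fun u h1 h2 => by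
    have := hanti h1 hm.le h2
    linarith
  have hmr : StrictMonoOn (FTV V K c) (Ici m) :=
    F_mono hA1 K c (convex_Ici m) (Ici_subset_Ici.2 hm0.le) (by
      intro u hu
      rw [interior_Ici] at hu
      have := hanti hm.le (hm.le.trans (le_of_lt hu)) hu
      linarith)
  obtain ⟨k1, k2, k3, k4, k5⟩ := hK1
  rcases le_or_gt K (V' 0) with hK0 | hK0
  · -- `K ≤ K₀`
    have hml : StrictAntiOn (FTV V K c) (Icc 0 m) :=
      F_anti hA1 K c (convex_Icc 0 m) Icc_subset_Ici_self (by
        intro u hu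
        rw [interior_Icc] at hu
        rcases le_or_gt UM u with h | h
        · exact hVl u h hu.2
        · have := hmono ⟨le_refl 0, hUM.le⟩ ⟨hu.1.le, h.le⟩ hu.1
          linarith)
    have hKK : K < K₁ := by linarith
    rcases le_or_gt c (cmf V umx K) with hc | hc
    · have hubm : ub = m := by
        rcases lt_trichotomy ub m with h | h | h
        · have := hml ⟨hub.le, h.le⟩ ⟨hm0.le, le_refl m⟩ h
          linarith
        · exact h
        · have := hmr (le_refl m) h.le h
          linarith
      subst hubm
      refine Or.inr (Or.inl ⟨hVm, fun u hu => ?_, UM, hm, fun u h1 h2 => ?_⟩)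
      · have := hmr (mem_Ici.2 le_rfl) hu.le hu
        linarith
      · rcases h2.eq_or_lt with h | h
        · rw [h]; exact ⟨hVm.ge, hF.ge⟩
        · have := hml ⟨(hUM.trans h1).le, h2⟩ ⟨hub.le, le_refl _⟩ h
          exact ⟨(hVl u h1.le h).le, by linarith⟩
    · have hc' : c0v V ≤ c := by
        by_contra! h
        exact hD (Or.inr (Or.inr ⟨hKp, hKK, hc, h⟩))
      have hneg : ∀ u, 0 < u → u ≤ m → FTV V K c u < 0 := by
        intro u h1 h2
        have := hml ⟨le_refl 0, hm0.le⟩ ⟨h1.le, h2⟩ h1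
        linarith
      have hubm : m < ub := by
        by_contra! h
        linarith [hneg ub hub h]
      refine Or.inl ⟨fun u hu => ?_, fun u hu hu' => ?_⟩
      · have := hmr hubm.le (hubm.le.trans hu.le) hu
        linarith
      · rcases le_or_gt u m with h | h
        · exact (hneg u hu h).le
        · have := hmr h.le hubm.le hu'
          linarith
  · -- `K₀ < K`
    obtain ⟨hM, hVM⟩ := huMx K hK0 hKM
    set M := uMx K with hMdef
    have hcM : FTV V K c M = cMf V uMx K - c := rfl
    have hVr : ∀ u, M < u → u < m → K < V' u := by
      intro u h1 h2
      rcases le_or_gt UM u with h | h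
      · exact hVl u h h2
      · have := hmono ⟨hM.1.le, hM.2.le⟩ ⟨(hM.1.trans h1).le, h.le⟩ h1
        linarith
    have hMm : M < m := hM.2.trans hm
    have h1 : StrictMonoOn (FTV V K c) (Icc 0 M) :=
      F_mono hA1 K c (convex_Icc 0 M) Icc_subset_Ici_self (by
        intro u hu
        rw [interior_Icc] at hu
        have := hmono ⟨hu.1.le, (hu.2.trans hM.2).le⟩ ⟨hM.1.le, hM.2.le⟩ hu.2
        linarith)
    have h2 : StrictAntiOn (FTV V K c) (Icc M m) :=
      F_anti hA1 K c (convex_Icc M m) (fun u hu => hM.1.le.trans hu.1) (by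
        intro u hu
        rw [interior_Icc] at hu
        exact hVr u hu.1 hu.2)
    rcases le_or_gt c (cmf V umx K) with hc | hc
    · have hFm : 0 ≤ FTV V K c m := by linarith
      have hnn : ∀ u, M ≤ u → 0 ≤ FTV V K c u := by
        intro u hu
        rcases le_or_gt u m with h | h
        · have := h2.antitoneOn ⟨hu, h⟩ ⟨hMm.le, le_refl m⟩ h
          linarith
        · have := hmr (le_refl m) h.le h
          linarith
      rcases lt_or_ge ub M with hlt' | hge
      · refine Or.inl ⟨fun u hu => ?_, fun u hu hu' => ?_⟩
        · rcases le_or_gt u M with h | h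
          · have := h1 ⟨hub.le, hlt'.le⟩ ⟨(hub.trans hu).le, h⟩ hu
            linarith
          · exact hnn u h.le
        · have := h1 ⟨hu.le, (hu'.trans hlt').le⟩ ⟨hub.le, hlt'.le⟩ hu'
          linarith
      · have hubm : ub = m := by
          rcases lt_trichotomy ub m with h | h | h
          · have := h2 ⟨hge, h.le⟩ ⟨hMm.le, le_refl m⟩ h
            linarith
          · exact h
          · have := hmr (le_refl m) h.le h
            linarith
        rw [hubm]
        refine Or.inr (Or.inl ⟨hVm, fun u hu => hnn u (hMm.trans hu).le, UM, hm,
          fun u h1 h2 => ⟨?_, hnn u (hM.2.trans h1).le⟩⟩)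
        rcases h2.eq_or_lt with h | h
        · rw [h]; exact hVm.ge
        · exact (hVl u h1.le h).le
    · rcases le_or_gt (cMf V uMx K) c with hcM' | hcM'
      · have hFM : FTV V K c M ≤ 0 := by linarith
        have hnp : ∀ u, 0 ≤ u → u ≤ m → u ≠ M → FTV V K c u < 0 := by
          intro u hu hum hne
          rcases lt_or_gt_of_ne hne with h | h
          · have := h1 ⟨hu, h.le⟩ ⟨hM.1.le, le_refl M⟩ h
            linarith
          · have := h2 ⟨le_refl M, hMm.le⟩ ⟨h.le, hum⟩ h
            linarith
        have hnp' : ∀ u, 0 ≤ u → u ≤ m → FTV V K c u ≤ 0 := by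
          intro u hu hum
          by_cases h : u = M
          · rw [h]; exact hFM
          · exact (hnp u hu hum h).le
        rcases le_or_gt ub m with hle | hgt
        · have hubM : ub = M := by
            by_contra h
            linarith [hnp ub hub.le hle h]
          rw [hubM]
          refine Or.inr (Or.inr ⟨hVM, fun u h3 h4 => hnp' u h3.le (h4.trans hMm).le, m, hMm,
            fun u h3 h4 => ⟨?_, hnp' u (hM.1.le.trans h3) h4.le⟩⟩)
          rcases h3.eq_or_lt with h | h
          · rw [← h]; exact hVM.ge
          · exact (hVr u h h4).le
        · refine Or.inl ⟨fun u hu => ?_, fun u hu hu' => ?_⟩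
          · have := hmr hgt.le (hgt.le.trans hu.le) hu
            linarith
          · rcases le_or_gt u m with h | h
            · exact hnp' u hu.le h
            · have := hmr h.le hgt.le hu'
              linarith
      · exfalso
        have hc1 : c ≤ c1f V umx K := by
          by_contra! h
          exact hD (Or.inl ⟨hK0, hKM, h, hcM'⟩)
        have hc0' : c ≤ c0v V := by
          rcases le_max_iff.1 hc1 with h | h
          · exact h
          · linarith
        have hKK : K < K₁ := by
          by_contra! h
          rcases h.eq_or_lt with h | h
          · rw [h] at k4; linarith
          · linarith [k5 K h hKM]
        rcases hc0'.eq_or_lt with h | h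
        · exact hD (Or.inr (Or.inl ⟨hK0, hKK, h⟩))
        · exact hD (Or.inr (Or.inr ⟨hKp, hKK, hc, h⟩))

/-! ### Homoclinic orbits -/

lemma g1_pos {κ : ℝ → ℝ} {τ : ℝ} (hA2 : A2 κ) (hτ : 0 < τ) {u : ℝ} (hu : 0 < u) :
    0 < g1TV κ τ u := by
  have := hA2.2 (1 / u) (by positivity)
  unfold g1TV
  positivity

lemma g2_pos {κ : ℝ → ℝ} {τ : ℝ} (hA2 : A2 κ) (hτ : 0 < τ) {u : ℝ} (hu : 0 < u) :
    0 < g2TV κ τ u := by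
  have := hA2.2 (1 / u) (by positivity)
  unfold g2TV
  positivity

section HOrb

variable {V V' V'' κ : ℝ → ℝ} {τ UM K c μ ub : ℝ} {u w : ℝ → ℝ}

/-- A homoclinic orbit never meets an equilibrium. -/
lemma no_eq (hA1 : A1 V V' V'' UM) (hA2 : A2 κ) (hτ : 0 < τ)
    (hsol : IsTVSol V V' κ τ K c μ u w) (hup : ∀ z, 0 < u z) (hHO : HO ub u w)
    {z : ℝ} (hw0 : w z = 0) : fTV V K c (u z) ≠ 0 := by
  intro hf
  have h := equilibrium_const hA1 hA2 hτ hsol (hup z) hf rfl hw0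
  obtain ⟨hb, -, -, -, hne⟩ := hHO
  have hlim : Tendsto u atBot (nhds (u z)) :=
    tendsto_const_nhds.congr fun y => (h y).1.symm
  have := tendsto_nhds_unique hb hlim
  exact hne fun y => ⟨by rw [this]; exact (h y).1, (h y).2⟩

lemma le_ub (hA1 : A1 V V' V'' UM) (hA2 : A2 κ) (hτ : 0 < τ)
    (hsol : IsTVSol V V' κ τ K c μ u w) (hup : ∀ z, 0 < u z) (hHO : HO ub u w)
    (h : ∀ x, ub < x → 0 ≤ fTV V K c x) : ∀ z, u z ≤ ub := by
  intro z0
  by_contra! h0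
  have hc : Continuous u := continuous_iff_continuousAt.2 fun z => (hsol.1 z).continuousAt
  obtain ⟨z, hz⟩ := exists_max hc hHO.1 hHO.2.1 h0
  have hmax : IsLocalMax u z := Eventually.of_forall hz
  have hw0 : w z = 0 := hmax.hasDerivAt_eq_zero (hsol.1 z)
  have h1 := localMax_snd hsol.1 hsol.2 hmax
  simp only [hw0, mul_zero, add_zero] at h1
  have h2 := h (u z) (h0.trans_le (hz z0))
  have h3 := no_eq hA1 hA2 hτ hsol hup hHO hw0
  have h4 := mul_pos (g1_pos hA2 hτ (hup z)) (lt_of_le_of_ne h2 h3.symm)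
  linarith

lemma ge_ub (hA1 : A1 V V' V'' UM) (hA2 : A2 κ) (hτ : 0 < τ)
    (hsol : IsTVSol V V' κ τ K c μ u w) (hup : ∀ z, 0 < u z) (hHO : HO ub u w)
    (h : ∀ x, 0 < x → x < ub → fTV V K c x ≤ 0) : ∀ z, ub ≤ u z := by
  intro z0
  by_contra! h0
  have hc : Continuous u := continuous_iff_continuousAt.2 fun z => (hsol.1 z).continuousAt
  obtain ⟨z, hz⟩ := exists_max (u := fun z => - u z) (ub := -ub) (z0 := z0)
    hc.neg hHO.1.neg hHO.2.1.neg (by simpa using h0)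
  have hmax : IsLocalMax (fun z => - u z) z := Eventually.of_forall hz
  have hw0 : w z = 0 := by
    have := hmax.hasDerivAt_eq_zero (hsol.1 z).fun_neg
    linarith
  have h1 := localMax_snd (fun z => (hsol.1 z).fun_neg) (fun z => (hsol.2 z).fun_neg) hmax
  simp only [hw0, mul_zero, add_zero] at h1
  have h2 := h (u z) (hup z) (by linarith [hz z0])
  have h3 := no_eq hA1 hA2 hτ hsol hup hHO hw0
  have h4 := mul_neg_of_pos_of_neg (g1_pos hA2 hτ (hup z)) (lt_of_le_of_ne h2 h3)
  linarith

/-- A homoclinic orbit cannot be locally equal to `ub`. -/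
lemma not_loc (hA1 : A1 V V' V'' UM) (hA2 : A2 κ) (hτ : 0 < τ)
    (hsol : IsTVSol V V' κ τ K c μ u w) (hup : ∀ z, 0 < u z) (hHO : HO ub u w)
    (hf : fTV V K c ub = 0) {Z : ℝ} (hZ : ∀ᶠ z in nhds Z, u z = ub) : False := by
  have hw0 : w Z = 0 := by
    have h : u =ᶠ[nhds Z] fun _ => ub := hZ
    have := h.deriv_eq
    rw [(hsol.1 Z).deriv] at this
    simpa using this
  have := no_eq hA1 hA2 hτ hsol hup hHO hw0
  rw [hZ.self_of_nhds] at this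
  exact this hf

/-- The sign of `h` near the degenerate equilibrium. -/
lemma h_sign (hA1 : A1 V V' V'' UM) (hA2 : A2 κ) (hτ : 0 < τ) (hKp : 0 < K) (hub : 0 < ub)
    (hV : V' ub = K) (hup : ∀ z, 0 < u z) (hHO : HO ub u w)
    (hge : ∀ᶠ z in atBot, K ≤ V' (u z)) :
    (∀ᶠ z in atBot, g2TV κ τ (u z) * hTV V' K μ (u z) ≤ 0) ∨
    (∀ᶠ z in atTop, 0 ≤ g2TV κ τ (u z) * hTV V' K μ (u z)) := by
  rcases le_or_gt μ 0 with hμ | hμ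
  · left
    filter_upwards [hge] with z hz
    apply mul_nonpos_of_nonneg_of_nonpos (g2_pos hA2 hτ (hup z)).le
    have : (K - V' (u z)) / K ≤ 0 := div_nonpos_of_nonpos_of_nonneg (by linarith) hKp.le
    unfold hTV fdTV
    linarith
  · right
    have hcont : ContinuousAt (hTV V' K μ) ub := by
      have := (hA1.2.2.1 ub hub).continuousAt
      unfold hTV fdTV
      fun_prop
    have h0 : hTV V' K μ ub = μ := by simp [hTV, fdTV, hV]
    have ht : Tendsto (fun z => hTV V' K μ (u z)) atTop (nhds μ) := by
      have := hcont.tendsto.comp hHO.2.1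
      rw [h0] at this
      exact this
    filter_upwards [ht.eventually_const_lt hμ] with z hz
    exact mul_nonneg (g2_pos hA2 hτ (hup z)).le hz.le

end HOrb

theorem stmt1
    (V V' V'' κ : ℝ → ℝ) (τ UM K c K₁ : ℝ) (uMx umx : ℝ → ℝ)
    (hA1 : A1 V V' V'' UM) (hA2 : A2 κ) (hτ : 0 < τ) (hK : K ≠ 0)
    (huMx : UMaxHyp V' UM uMx) (humx : UMinHyp V' UM umx)
    (hK1 : K1Hyp V V' UM umx K₁)
    (hD : (K, c) ∉ D1 V V' UM uMx umx ∪ D2 V V' umx K₁) :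
    ∀ μ ub : ℝ, 0 < ub → fTV V K c ub = 0 → ¬ HasHO V V' κ τ K c μ ub := by
  intro μ ub hub hf hHas
  obtain ⟨u, w, hsol, hup, hHO⟩ := hHas
  have hHO' := hHO
  obtain ⟨hb, ht, hwb, hwt, hne⟩ := hHO'
  rcases pattern hA1 hK huMx humx hK1 hD hub hf with ⟨h1, h2⟩ | ⟨hKp, hV, h1, a, ha, h2⟩ |
    ⟨hKp, hV, h1, b, hb', h2⟩
  · have e1 := le_ub hA1 hA2 hτ hsol hup hHO h1
    have e2 := ge_ub hA1 hA2 hτ hsol hup hHO h2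
    exact not_loc hA1 hA2 hτ hsol hup hHO hf (Z := 0)
      (Eventually.of_forall fun z => le_antisymm (e1 z) (e2 z))
  · have e1 := le_ub hA1 hA2 hτ hsol hup hHO h1
    have nb := hb.eventually_const_lt ha
    have nt := ht.eventually_const_lt ha
    obtain ⟨Z, hZ⟩ := ends_const (u := fun z => - u z) (w := fun z => - w z)
      (A := fun z => - (g1TV κ τ (u z) * fTV V K c (u z)))
      (B := fun z => g2TV κ τ (u z) * hTV V' K μ (u z)) (ub := -ub)
      (fun z => (hsol.1 z).fun_neg)
      (fun z => by
        exact (hsol.2 z).fun_neg.congr_deriv (by ring))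
      hb.neg (by simpa using hwb.neg) ht.neg (by simpa using hwt.neg)
      (nb.mono fun z hz => neg_nonpos.2
        (mul_nonneg (g1_pos hA2 hτ (hup z)).le (h2 _ hz (e1 z)).2))
      (nt.mono fun z hz => neg_nonpos.2
        (mul_nonneg (g1_pos hA2 hτ (hup z)).le (h2 _ hz (e1 z)).2))
      (h_sign hA1 hA2 hτ hKp hub hV hup hHO (nb.mono fun z hz => (h2 _ hz (e1 z)).1))
      (fun z => neg_le_neg (e1 z))
    exact not_loc hA1 hA2 hτ hsol hup hHO hf (hZ.mono fun z hz => neg_injective hz)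
  · have e1 := ge_ub hA1 hA2 hτ hsol hup hHO h1
    have nb := hb.eventually_lt_const hb'
    have nt := ht.eventually_lt_const hb'
    obtain ⟨Z, hZ⟩ := ends_const (u := u) (w := w)
      (A := fun z => g1TV κ τ (u z) * fTV V K c (u z))
      (B := fun z => g2TV κ τ (u z) * hTV V' K μ (u z)) (ub := ub)
      hsol.1 hsol.2 hb hwb ht hwt
      (nb.mono fun z hz =>
        mul_nonpos_of_nonneg_of_nonpos (g1_pos hA2 hτ (hup z)).le (h2 _ (e1 z) hz).2)
      (nt.mono fun z hz =>
        mul_nonpos_of_nonneg_of_nonpos (g1_pos hA2 hτ (hup z)).le (h2 _ (e1 z) hz).2)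
      (h_sign hA1 hA2 hτ hKp hub hV hup hHO (nb.mono fun z hz => (h2 _ (e1 z) hz).1))
      e1
    exact not_loc hA1 hA2 hτ hsol hup hHO hf hZ

end TrafficTW
end
end

section
/- If (K,c) ∈ D₁ ∪ D₂, then for every μ ∈ ℝ the system (TV) has no solution (u,w) with u > 0 satisfying condition (HO) with level ū = u₀, the middle (respectively smaller, for D₂) zero of f at which f'(u₀) < 0. -/
open Set Filter MeasureTheory

noncomputable section

namespace TrafficTW

/-- Global uniqueness for the planar system. -/
theorem aux_uniq (G B : ℝ → ℝ) (hG : ContDiffOn ℝ 1 G (Ioi 0)) (hB : ContDiffOn ℝ 1 B (Ioi 0))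
    (u w u' w' : ℝ → ℝ)
    (hu : ∀ z, HasDerivAt u (w z) z) (hw : ∀ z, HasDerivAt w (G (u z) + B (u z) * w z) z)
    (hu' : ∀ z, HasDerivAt u' (w' z) z) (hw' : ∀ z, HasDerivAt w' (G (u' z) + B (u' z) * w' z) z)
    (hp : ∀ z, 0 < u z) (hp' : ∀ z, 0 < u' z) (t₀ : ℝ) (h1 : u t₀ = u' t₀) (h2 : w t₀ = w' t₀) :
    ∀ z, u z = u' z ∧ w z = w' z := by
  intro z
  have cu : Continuous u := continuous_iff_continuousAt.2 fun z => (hu z).continuousAt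
  have cw : Continuous w := continuous_iff_continuousAt.2 fun z => (hw z).continuousAt
  have cu' : Continuous u' := continuous_iff_continuousAt.2 fun z => (hu' z).continuousAt
  have cw' : Continuous w' := continuous_iff_continuousAt.2 fun z => (hw' z).continuousAt
  set a := min z t₀ - 1 with ha
  set b := max z t₀ + 1 with hb
  have hz : z ∈ Ioo a b := ⟨by have := min_le_left z t₀; linarith, by have := le_max_left z t₀; linarith⟩
  have ht : t₀ ∈ Ioo a b :=
    ⟨by have := min_le_right z t₀; linarith, by have := le_max_right z t₀; linarith⟩
  have hab : (Icc a b).Nonempty := ⟨z, Ioo_subset_Icc_self hz⟩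
  obtain ⟨m1, hm1, hm1'⟩ := isCompact_Icc.exists_isMinOn hab (cu.min cu').continuousOn
  obtain ⟨m2, -, hm2⟩ := isCompact_Icc.exists_isMaxOn hab (cu.max cu').continuousOn
  obtain ⟨m3, -, hm3⟩ := isCompact_Icc.exists_isMaxOn hab (cw.abs.max cw'.abs).continuousOn
  set m := min (u m1) (u' m1)
  set M := max (u m2) (u' m2)
  set N := max |w m3| |w' m3|
  have hm : 0 < m := lt_min (hp _) (hp' _)
  let S : Set (ℝ × ℝ) := Icc m M ×ˢ Icc (-N) N
  let v : ℝ × ℝ → ℝ × ℝ := fun p => (p.2, G p.1 + B p.1 * p.2)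
  have hv : ContDiffOn ℝ 1 v S := by
    have hmaps : MapsTo (Prod.fst : ℝ × ℝ → ℝ) S (Ioi 0) := fun p hp => lt_of_lt_of_le hm hp.1.1
    have g1 : ContDiffOn ℝ 1 (fun p : ℝ × ℝ => G p.1) S := hG.comp contDiff_fst.contDiffOn hmaps
    have g2 : ContDiffOn ℝ 1 (fun p : ℝ × ℝ => B p.1) S := hB.comp contDiff_fst.contDiffOn hmaps
    exact contDiff_snd.contDiffOn.prodMk (g1.add (g2.mul contDiff_snd.contDiffOn))
  obtain ⟨L, hL⟩ := hv.exists_lipschitzOnWith one_ne_zero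
    ((convex_Icc _ _).prod (convex_Icc _ _)) (isCompact_Icc.prod isCompact_Icc)
  have key := ODE_solution_unique_of_mem_Ioo (v := fun _ => v) (s := fun _ => S) (K := L)
    (f := fun t => (u t, w t)) (g := fun t => (u' t, w' t)) (a := a) (b := b) (t₀ := t₀)
    (fun t _ => hL) ht
    (fun t ht => by
      have ht := Ioo_subset_Icc_self ht
      refine ⟨(hu t).prodMk (hw t), ⟨?_, ?_⟩, abs_le.1 ?_⟩
      · exact (hm1' ht).trans (min_le_left _ _)
      · exact (le_max_left _ _).trans (hm2 ht)
      · exact (le_max_left _ _).trans (hm3 ht))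
    (fun t ht => by
      have ht := Ioo_subset_Icc_self ht
      refine ⟨(hu' t).prodMk (hw' t), ⟨?_, ?_⟩, abs_le.1 ?_⟩
      · exact (hm1' ht).trans (min_le_right _ _)
      · exact (le_max_right _ _).trans (hm2 ht)
      · exact (le_max_right _ _).trans (hm3 ht))
    (by simp [h1, h2])
  have := key hz
  simpa using this

/-- `G` has the sign of `-(u-u0)` near `u0`, quantitatively. -/
theorem aux_sign (G : ℝ → ℝ) (u0 d : ℝ) (hd : d < 0) (h0 : G u0 = 0) (hG : HasDerivAt G d u0) :
    ∀ᶠ x in nhds u0, G x * (x - u0) ≤ d / 2 * (x - u0) ^ 2 := by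
  have h := hasDerivAt_iff_isLittleO.1 hG
  have h := h.def (c := -d / 2) (by linarith)
  filter_upwards [h] with x hx
  simp only [h0, sub_zero, smul_eq_mul, Real.norm_eq_abs] at hx
  have h1 : (G x - (x - u0) * d) * (x - u0) ≤ -d / 2 * (x - u0) ^ 2 := by
    calc _ ≤ |(G x - (x - u0) * d) * (x - u0)| := le_abs_self _
      _ = |G x - (x - u0) * d| * |x - u0| := abs_mul _ _
      _ ≤ -d / 2 * |x - u0| * |x - u0| := by gcongr
      _ = -d / 2 * (x - u0) ^ 2 := by rw [mul_assoc, abs_mul_abs_self]; ring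
  nlinarith

/-- Lyapunov case. -/
theorem aux_lyap (G B : ℝ → ℝ) (hG : ContDiffOn ℝ 1 G (Ioi 0)) (hB : ContDiffOn ℝ 1 B (Ioi 0))
    (u0 d : ℝ) (hu0 : 0 < u0) (hd : d < 0) (h0 : G u0 = 0) (hGd : HasDerivAt G d u0)
    (hB0 : 0 < B u0) (u w : ℝ → ℝ)
    (hu : ∀ z, HasDerivAt u (w z) z) (hw : ∀ z, HasDerivAt w (G (u z) + B (u z) * w z) z)
    (hp : ∀ z, 0 < u z) (lu : Tendsto u atTop (nhds u0)) (lw : Tendsto w atTop (nhds 0)) :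
    ∃ z, u z = u0 ∧ w z = 0 := by
  let Φ : ℝ → ℝ := fun x => ∫ t in u0..x, G t
  have hΦ : ∀ x, 0 < x → HasDerivAt Φ (G x) x := by
    intro x hx
    have hc : ContinuousAt G x := hG.continuousOn.continuousAt (Ioi_mem_nhds hx)
    refine intervalIntegral.integral_hasDerivAt_right ?_ ?_ hc
    · refine (hG.continuousOn.mono ?_).intervalIntegrable
      intro t ht
      exact lt_of_lt_of_le (lt_min hu0 hx) ht.1
    · exact hG.continuousOn.stronglyMeasurableAtFilter isOpen_Ioi x hx
  have hΦ0 : Φ u0 = 0 := by simp [Φ]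
  have hs := aux_sign G u0 d hd h0 hGd
  have hB1 : ∀ᶠ x in nhds u0, 0 < B x :=
    (hB.continuousOn.continuousAt (Ioi_mem_nhds hu0)).eventually (lt_mem_nhds hB0)
  obtain ⟨ε, hε, hball⟩ := Metric.eventually_nhds_iff.1 (hs.and (hB1.and (lt_mem_nhds hu0)))
  have hneg : ∀ x, dist x u0 < ε → x ≠ u0 → Φ x < 0 := by
    intro x hx hne
    rw [Real.dist_eq] at hx
    rcases lt_or_gt_of_ne hne with h | h
    · rw [abs_of_neg (by linarith)] at hx
      have hin : ∀ y ∈ Icc x u0, y < u0 → 0 < y ∧ 0 < G y := by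
        intro y hy hy'
        obtain ⟨a1, a2, a3⟩ := hball (y := y) (by
          rw [Real.dist_eq, abs_of_neg (by linarith)]; linarith [hy.1])
        refine ⟨a3, ?_⟩
        by_contra hcon
        nlinarith [sq_pos_of_pos (sub_pos.2 hy')]
      have hx0 : 0 < x := (hin x ⟨le_rfl, h.le⟩ h).1
      obtain ⟨y, hy, he⟩ := exists_hasDerivAt_eq_slope Φ G h
        (fun t ht => (hΦ t (lt_of_lt_of_le hx0 ht.1)).continuousAt.continuousWithinAt)
        (fun t ht => hΦ t (hx0.trans ht.1))
      have := (hin y (Ioo_subset_Icc_self hy) hy.2).2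
      rw [he, hΦ0] at this
      have := (div_pos_iff_of_pos_right (by linarith)).1 this
      linarith
    · rw [abs_of_pos (by linarith)] at hx
      have hin : ∀ y ∈ Icc u0 x, u0 < y → G y < 0 := by
        intro y hy hy'
        obtain ⟨a1, a2, a3⟩ := hball (y := y) (by
          rw [Real.dist_eq, abs_of_pos (by linarith)]; linarith [hy.2])
        by_contra hcon
        nlinarith [sq_pos_of_pos (sub_pos.2 hy')]
      obtain ⟨y, hy, he⟩ := exists_hasDerivAt_eq_slope Φ G h
        (fun t ht => (hΦ t (lt_of_lt_of_le hu0 ht.1)).continuousAt.continuousWithinAt)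
        (fun t ht => hΦ t (hu0.trans ht.1))
      have := hin y (Ioo_subset_Icc_self hy) hy.1
      rw [he, hΦ0, div_neg_iff] at this
      rcases this with h | h <;> linarith
  let E : ℝ → ℝ := fun z => w z ^ 2 / 2 - Φ (u z)
  have hE : ∀ z, HasDerivAt E (B (u z) * w z ^ 2) z := by
    intro z
    have h1 := ((hw z).pow 2).div_const 2
    have h2 := (hΦ (u z) (hp z)).comp z (hu z)
    refine (h1.sub h2).congr_deriv ?_
    simp; ring
  have hEl : Tendsto E atTop (nhds 0) := by
    have h1 : Tendsto (fun z => w z ^ 2 / 2) atTop (nhds ((0:ℝ) ^ 2 / 2)) := (lw.pow 2).div_const 2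
    have h2 : Tendsto (fun z => Φ (u z)) atTop (nhds (Φ u0)) := (hΦ u0 hu0).continuousAt.tendsto.comp lu
    have := h1.sub h2
    simpa [hΦ0] using this
  obtain ⟨Z, hZ⟩ := eventually_atTop.1 (lu.eventually (Metric.ball_mem_nhds u0 hε))
  have hmono : MonotoneOn E (Ici Z) := by
    refine monotoneOn_of_deriv_nonneg (convex_Ici _) (fun z _ => (hE z).continuousAt.continuousWithinAt)
      (fun z _ => (hE z).differentiableAt.differentiableWithinAt) ?_
    intro z hz
    rw [(hE z).deriv]
    have := (hball (hZ z (interior_subset hz))).2.1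
    positivity
  have hle : E Z ≤ 0 := ge_of_tendsto hEl (eventually_atTop.2 ⟨Z, fun z hz => hmono self_mem_Ici hz hz⟩)
  have huZ : u Z = u0 := by
    by_contra hne
    have := hneg _ (hZ Z le_rfl) hne
    have : 0 < E Z := by simp only [E]; nlinarith [sq_nonneg (w Z)]
    linarith
  refine ⟨Z, huZ, ?_⟩
  simp only [E, huZ, hΦ0] at hle
  nlinarith [sq_nonneg (w Z)]

theorem aux_selfint (θ r : ℝ → ℝ) (cθ : Continuous θ) (cr : Continuous r) (hr : ∀ z, 0 < r z)
    (r1 : Tendsto r atBot (nhds 0)) (r2 : Tendsto r atTop (nhds 0)) (a b : ℝ) (hab : a < b)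
    (t1 : Tendsto θ atBot atTop) (t2 : Tendsto θ atTop atBot)
    (m1 : StrictAntiOn θ (Iic a)) (m2 : AntitoneOn θ (Ici b)) :
    ∃ z1 z2 : ℝ, z1 < z2 ∧ r z1 = r z2 ∧ ∃ n : ℕ, θ z1 = θ z2 + n * (2 * Real.pi) := by
  let m : ℝ → ℝ := fun z => if z ≤ a then - θ z else - θ a + (z - a)
  have hm : StrictMono m := by
    intro x y hxy
    simp only [m]
    split_ifs with h1 h2 h2
    · have := m1 h1 h2 hxy; linarith
    · have := m1.antitoneOn h1 self_mem_Iic h1; linarith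
    · linarith
    · linarith
  have cm : Continuous m := by
    refine Continuous.if_le (by fun_prop) (by fun_prop) continuous_id continuous_const ?_
    rintro x rfl; simp
  have mt : Tendsto m atTop atTop := by
    have : Tendsto (fun z => - θ a + (z - a)) atTop atTop :=
      tendsto_atTop_add_const_left _ _ (tendsto_atTop_add_const_right _ _ tendsto_id)
    refine this.congr' ?_
    filter_upwards [eventually_gt_atTop a] with z hz
    simp [m, not_le.2 hz]
  have mb : Tendsto m atBot atBot := by
    have : Tendsto (fun z => - θ z) atBot atBot := tendsto_neg_atTop_atBot.comp t1
    refine this.congr' ?_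
    filter_upwards [eventually_le_atBot a] with z hz
    simp [m, hz]
  have hsurj := cm.surjective mt mb
  let e := hm.orderIsoOfSurjective m hsurj
  have he : ∀ y, m (e.symm y) = y := fun y => e.apply_symm_apply y
  have ce : Continuous e.symm := e.symm.continuous
  have hea : ∀ y, θ a ≤ y → e.symm (-y) ≤ a ∧ θ (e.symm (-y)) = y := by
    intro y hy
    have h := he (-y)
    by_cases hc : e.symm (-y) ≤ a
    · refine ⟨hc, ?_⟩
      simp only [m, hc, if_true] at h
      linarith
    · simp only [m, hc, if_false] at h
      push Not at hc
      linarith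
  have hn : Tendsto (fun n : ℕ => (n : ℝ) * (2 * Real.pi)) atTop atTop :=
    tendsto_natCast_atTop_atTop.atTop_mul_const (by positivity)
  obtain ⟨R, hR⟩ := eventually_atTop.1 (r2.eventually (gt_mem_nhds (hr a)))
  set R' := max R b
  have e1 : ∀ᶠ n : ℕ in atTop, r (e.symm (-(θ b + n * (2 * Real.pi)))) < r b := by
    have : Tendsto (fun n : ℕ => e.symm (-(θ b + n * (2 * Real.pi)))) atTop atBot :=
      e.symm.tendsto_atBot.comp (tendsto_neg_atTop_atBot.comp (tendsto_atTop_add_const_left _ _ hn))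
    exact (r1.comp this).eventually (gt_mem_nhds (hr b))
  have e2 := hn.eventually_ge_atTop (θ a - θ b)
  have e3 := hn.eventually_ge_atTop (θ a - θ R')
  obtain ⟨n, h1, h2, h3⟩ := (e1.and (e2.and e3)).exists
  obtain ⟨y, hy1, hy2⟩ := ((t2.eventually_le_atBot (θ a - n * (2 * Real.pi))).and
    (eventually_ge_atTop R')).exists
  obtain ⟨zn, hzn, hzn'⟩ := intermediate_value_Icc' hy2 cθ.continuousOn
    (⟨hy1, by linarith⟩ : θ a - n * (2 * Real.pi) ∈ Icc (θ y) (θ R'))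
  have hbz : b ≤ zn := (le_max_right _ _).trans hzn.1
  let ψ : ℝ → ℝ := fun z => e.symm (-(θ z + n * (2 * Real.pi)))
  have cψ : Continuous ψ := ce.comp (by fun_prop)
  have hψ : ∀ z ∈ Icc b zn, ψ z ≤ a ∧ θ (ψ z) = θ z + n * (2 * Real.pi) := by
    intro z hz
    apply hea
    have := m2 hz.1 hbz hz.2
    linarith
  have hψn : ψ zn = a := by
    obtain ⟨q1, q2⟩ := hψ zn ⟨hbz, le_rfl⟩
    exact m1.injOn q1 self_mem_Iic (by rw [q2, hzn']; ring)
  obtain ⟨z, hz, hz0⟩ := intermediate_value_Icc' hbz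
    (f := fun z => r z - r (ψ z)) (cr.sub (cr.comp cψ)).continuousOn
    (⟨by
        have := hR zn ((le_max_left _ _).trans hzn.1)
        simp only [hψn]; linarith, by simp only [ψ]; linarith⟩ : (0:ℝ) ∈ Icc _ _)
  obtain ⟨q1, q2⟩ := hψ z hz
  exact ⟨ψ z, z, by linarith [hz.1], by simp only at hz0; linarith, n, q2⟩

theorem aux_center (G B : ℝ → ℝ) (hG : ContDiffOn ℝ 1 G (Ioi 0)) (hB : ContDiffOn ℝ 1 B (Ioi 0))
    (u0 d : ℝ) (hu0 : 0 < u0) (hd : d < 0) (h0 : G u0 = 0) (hGd : HasDerivAt G d u0)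
    (hB0 : B u0 = 0) (u w : ℝ → ℝ)
    (hu : ∀ z, HasDerivAt u (w z) z) (hw : ∀ z, HasDerivAt w (G (u z) + B (u z) * w z) z)
    (hp : ∀ z, 0 < u z) (lu : Tendsto u atTop (nhds u0)) (lw : Tendsto w atTop (nhds 0))
    (lu' : Tendsto u atBot (nhds u0)) (lw' : Tendsto w atBot (nhds 0)) :
    ∃ z, u z = u0 ∧ w z = 0 := by
  by_contra hcon
  push Not at hcon
  have cu : Continuous u := continuous_iff_continuousAt.2 fun z => (hu z).continuousAt
  have cw : Continuous w := continuous_iff_continuousAt.2 fun z => (hw z).continuousAt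
  let ζ : ℝ → ℂ := fun z => ⟨u z - u0, w z⟩
  let ζ' : ℝ → ℂ := fun z => ⟨w z, G (u z) + B (u z) * w z⟩
  have hζ : ∀ z, HasDerivAt ζ (ζ' z) z := by
    intro z
    have h1 := ((hu z).sub_const u0).ofReal_comp
    have h2 := ((hw z).ofReal_comp).mul_const Complex.I
    have := h1.add h2
    refine (this.congr_deriv ?_).congr_of_eventuallyEq (Eventually.of_forall fun z => ?_)
    · exact (Complex.mk_eq_add_mul_I _ _).symm
    · exact Complex.mk_eq_add_mul_I _ _
  have cζ : Continuous ζ := continuous_iff_continuousAt.2 fun z => (hζ z).continuousAt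
  have hne : ∀ z, ζ z ≠ 0 := by
    intro z hz
    have h1 := congrArg Complex.re hz
    have h2 := congrArg Complex.im hz
    simp only [ζ, Complex.zero_re, Complex.zero_im] at h1 h2
    exact hcon z (by linarith) h2
  have cGu : Continuous fun z => G (u z) := hG.continuousOn.comp_continuous cu hp
  have cBu : Continuous fun z => B (u z) := hB.continuousOn.comp_continuous cu hp
  have cζ' : Continuous ζ' := by
    have : ζ' = fun z => (w z : ℂ) + ((G (u z) + B (u z) * w z : ℝ) : ℂ) * Complex.I := by
      funext z; exact Complex.mk_eq_add_mul_I _ _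
    rw [this]
    exact (Complex.continuous_ofReal.comp cw).add
      ((Complex.continuous_ofReal.comp (cGu.add (cBu.mul cw))).mul continuous_const)
  have cq : Continuous fun z => ζ' z / ζ z := cζ'.div cζ hne
  let L : ℝ → ℂ := fun z => Complex.log (ζ 0) + ∫ t in (0:ℝ)..z, ζ' t / ζ t
  have hL : ∀ z, HasDerivAt L (ζ' z / ζ z) z := fun z =>
    ((cq.integral_hasStrictDerivAt 0 z).hasDerivAt).const_add _
  have hexp : ∀ z, ζ z = Complex.exp (L z) := by
    have hd0 : ∀ z, HasDerivAt (fun z => ζ z * Complex.exp (- L z)) 0 z := by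
      intro z
      refine ((hζ z).mul ((hL z).neg.cexp)).congr_deriv ?_
      have := hne z
      field_simp
      ring
    intro z
    have := is_const_of_deriv_eq_zero (fun z => (hd0 z).differentiableAt)
      (fun z => (hd0 z).deriv) z 0
    have hL0 : L 0 = Complex.log (ζ 0) := by simp [L]
    simp only [hL0, Complex.exp_neg, Complex.exp_log (hne 0), mul_inv_cancel₀ (hne 0)] at this
    exact (mul_inv_eq_one₀ (Complex.exp_ne_zero _)).1 this
  let θ : ℝ → ℝ := fun z => (L z).im
  let r : ℝ → ℝ := fun z => ‖ζ z‖
  have hθ : ∀ z, HasDerivAt θ ((ζ' z / ζ z).im) z := fun z =>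
    Complex.imCLM.hasFDerivAt.comp_hasDerivAt z (hL z)
  have cθ : Continuous θ := continuous_iff_continuousAt.2 fun z => (hθ z).continuousAt
  have hlim : ∀ l : Filter ℝ, Tendsto u l (nhds u0) → Tendsto w l (nhds 0) →
      Tendsto r l (nhds 0) := by
    intro l h1 h2
    have h3 : Tendsto (fun z => |u z - u0| + |w z|) l (nhds 0) := by
      have := (h1.sub_const u0).abs.add h2.abs
      simpa using this
    refine squeeze_zero (fun z => norm_nonneg _) (fun z => ?_) h3
    exact Complex.norm_le_abs_re_add_abs_im _
  set c := min (-d / 2) 1 / 2 with hc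
  have hcpos : 0 < c := by
    have : 0 < min (-d / 2) 1 := lt_min (by linarith) one_pos
    linarith
  have hc1 : 2 * c ≤ -d / 2 := by have := min_le_left (-d / 2) 1; linarith
  have hc2 : 2 * c ≤ 1 := by have := min_le_right (-d / 2) 1; linarith
  have hs := aux_sign G u0 d hd h0 hGd
  have hBs : ∀ᶠ x in nhds u0, |B x| < c := by
    have : ContinuousAt (fun x => |B x|) u0 :=
      (hB.continuousOn.continuousAt (Ioi_mem_nhds hu0)).abs
    exact this.eventually (gt_mem_nhds (by simpa [hB0] using hcpos))
  have hang : ∀ z, G (u z) * (u z - u0) ≤ d / 2 * (u z - u0) ^ 2 → |B (u z)| < c →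
      (ζ' z / ζ z).im ≤ -c := by
    intro z h1 h2
    have hns : 0 < Complex.normSq (ζ z) := Complex.normSq_pos.2 (hne z)
    rw [Complex.div_im, ← sub_div, div_le_iff₀ hns, Complex.normSq_apply]
    simp only [ζ, ζ']
    have h3 : B (u z) * (w z * (u z - u0)) ≤ c * ((w z ^ 2 + (u z - u0) ^ 2) / 2) := by
      calc _ ≤ |B (u z) * (w z * (u z - u0))| := le_abs_self _
        _ = |B (u z)| * |w z * (u z - u0)| := abs_mul _ _
        _ ≤ c * ((w z ^ 2 + (u z - u0) ^ 2) / 2) := by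
          gcongr
          rw [abs_le]
          constructor <;> nlinarith [sq_nonneg (w z - (u z - u0)), sq_nonneg (w z + (u z - u0))]
    nlinarith [sq_nonneg (w z), sq_nonneg (u z - u0),
      mul_nonneg (sub_nonneg.2 hc1) (sq_nonneg (u z - u0)),
      mul_nonneg (sub_nonneg.2 hc2) (sq_nonneg (w z)), mul_nonneg hcpos.le (sq_nonneg (w z)),
      mul_nonneg hcpos.le (sq_nonneg (u z - u0))]
  obtain ⟨b, hb⟩ := eventually_atTop.1 (lu.eventually (hs.and hBs))
  obtain ⟨a, ha⟩ := eventually_atBot.1 (lu'.eventually (hs.and hBs))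
  set b' := max b (a + 1)
  have hab : a < b' := lt_of_lt_of_le (by linarith) (le_max_right _ _)
  have hφ : ∀ z, HasDerivAt (fun z => θ z + c * z) ((ζ' z / ζ z).im + c) z := by
    intro z
    exact ((hθ z).add ((hasDerivAt_id z).const_mul c)).congr_deriv (by simp)
  have anti : ∀ s : Set ℝ, Convex ℝ s → (∀ z ∈ s, (ζ' z / ζ z).im ≤ -c) →
      AntitoneOn (fun z => θ z + c * z) s := by
    intro s hs1 hs2
    refine antitoneOn_of_deriv_nonpos hs1 (fun z _ => (hφ z).continuousAt.continuousWithinAt)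
      (fun z _ => (hφ z).differentiableAt.differentiableWithinAt) ?_
    intro z hz
    rw [(hφ z).deriv]
    linarith [hs2 z (interior_subset hz)]
  have anti1 := anti (Iic a) (convex_Iic _) (fun z hz => hang z (ha z hz).1 (ha z hz).2)
  have anti2 := anti (Ici b') (convex_Ici _) (fun z hz => by
    have := hb z ((le_max_left _ _).trans hz)
    exact hang z this.1 this.2)
  have t1 : Tendsto θ atBot atTop := by
    have h : Tendsto (fun z => (θ a + c * a) + c * (-z)) atBot atTop :=
      tendsto_atTop_add_const_left _ _ (tendsto_neg_atBot_atTop.const_mul_atTop hcpos)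
    refine tendsto_atTop_mono' _ ?_ h
    filter_upwards [eventually_le_atBot a] with z hz
    have := anti1 hz self_mem_Iic hz
    simp only at this
    linarith
  have t2 : Tendsto θ atTop atBot := by
    have h : Tendsto (fun z => (θ b' + c * b') + -(c * z)) atTop atBot :=
      tendsto_atBot_add_const_left _ _
        (tendsto_neg_atTop_atBot.comp (tendsto_id.const_mul_atTop hcpos))
    refine tendsto_atBot_mono' _ ?_ h
    filter_upwards [eventually_ge_atTop b'] with z hz
    have := anti2 self_mem_Ici hz hz
    simp only at this
    linarith
  obtain ⟨z1, z2, hlt, hr, n, hn⟩ := aux_selfint θ r cθ cζ.norm (fun z => norm_pos_iff.2 (hne z))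
    (hlim _ lu' lw') (hlim _ lu lw) a b' hab t1 t2
    (fun x hx y hy hxy => by
      have := anti1 hx hy hxy.le
      simp only at this
      nlinarith)
    (fun x hx y hy hxy => by
      have := anti2 hx hy hxy
      simp only at this
      nlinarith)
  have heq : ζ z1 = ζ z2 := by
    simp only [r, hexp, Complex.norm_exp] at hr
    have hre := Real.exp_injective hr
    rw [hexp, hexp, Complex.exp_eq_exp_iff_exists_int]
    refine ⟨n, Complex.ext ?_ ?_⟩
    · simp [hre]
    · simpa using hn
  have he1 : u z1 = u z2 := by
    have := congrArg Complex.re heq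
    simp only [ζ] at this
    linarith
  have he2 : w z1 = w z2 := congrArg Complex.im heq
  -- periodicity
  set T := z2 - z1 with hT
  have hper := aux_uniq G B hG hB u w (fun z => u (z + T)) (fun z => w (z + T)) hu hw
    (fun z => (hu (z + T)).comp_add_const z T) (fun z => (hw (z + T)).comp_add_const z T)
    hp (fun z => hp _) z1 (by simp [hT, he1]) (by simp [hT, he2])
  have hperN : ∀ k : ℕ, u (k * T) = u 0 ∧ w (k * T) = w 0 := by
    intro k
    induction k with
    | zero => simp
    | succ k ih =>
      have := hper (k * T)
      push_cast
      rw [add_mul, one_mul, ← this.1, ← this.2]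
      exact ih
  have hkT : Tendsto (fun k : ℕ => (k : ℝ) * T) atTop atTop :=
    tendsto_natCast_atTop_atTop.atTop_mul_const (by linarith)
  have l1 := lu.comp hkT
  have l2 := lw.comp hkT
  have l1' : Tendsto (fun _ : ℕ => u 0) atTop (nhds u0) := l1.congr fun k => (hperN k).1
  have l2' : Tendsto (fun _ : ℕ => w 0) atTop (nhds 0) := l2.congr fun k => (hperN k).2
  exact hcon 0 (tendsto_nhds_unique tendsto_const_nhds l1')
    (tendsto_nhds_unique tendsto_const_nhds l2')

theorem aux_core (G B : ℝ → ℝ) (hG : ContDiffOn ℝ 1 G (Ioi 0)) (hB : ContDiffOn ℝ 1 B (Ioi 0))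
    (u0 d : ℝ) (hu0 : 0 < u0) (hd : d < 0) (h0 : G u0 = 0) (hGd : HasDerivAt G d u0)
    (u w : ℝ → ℝ)
    (hu : ∀ z, HasDerivAt u (w z) z) (hw : ∀ z, HasDerivAt w (G (u z) + B (u z) * w z) z)
    (hp : ∀ z, 0 < u z) (lu : Tendsto u atTop (nhds u0)) (lw : Tendsto w atTop (nhds 0))
    (lu' : Tendsto u atBot (nhds u0)) (lw' : Tendsto w atBot (nhds 0)) :
    ∀ z, u z = u0 ∧ w z = 0 := by
  have hex : ∃ z, u z = u0 ∧ w z = 0 := by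
    rcases lt_trichotomy (B u0) 0 with h | h | h
    · obtain ⟨z, h1, h2⟩ := aux_lyap G (fun x => - B x) hG hB.neg u0 d hu0 hd h0 hGd (by linarith)
        (fun z => u (-z)) (fun z => - w (-z))
        (fun z => ((hu (-z)).comp z (hasDerivAt_neg z)).congr_deriv (by simp))
        (fun z => by
          have := ((hw (-z)).comp z (hasDerivAt_neg z)).neg
          refine this.congr_deriv ?_
          ring)
        (fun z => hp _) (lu'.comp tendsto_neg_atTop_atBot)
        (by simpa using (lw'.comp tendsto_neg_atTop_atBot).neg)
      exact ⟨-z, h1, by simpa using h2⟩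
    · exact aux_center G B hG hB u0 d hu0 hd h0 hGd h u w hu hw hp lu lw lu' lw'
    · exact aux_lyap G B hG hB u0 d hu0 hd h0 hGd h u w hu hw hp lu lw
  obtain ⟨z₀, h1, h2⟩ := hex
  exact aux_uniq G B hG hB u w (fun _ => u0) (fun _ => 0) hu hw
    (fun z => hasDerivAt_const _ _) (fun z => by simpa [h0] using hasDerivAt_const z (0:ℝ))
    hp (fun _ => hu0) z₀ h1 h2

theorem aux_quasi (V' V'' : ℝ → ℝ) (UM : ℝ) (hd : ∀ u ∈ Ioi (0:ℝ), HasDerivAt V' (V'' u) u)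
    (hmax : ∀ u, 0 < u → V' u ≤ V' UM) (hz : ∀ u, 0 < u → (V'' u = 0 ↔ u = UM))
    (a b c K : ℝ) (ha : 0 < a) (hab : a < b) (hbc : b < c) (h1 : K ≤ V' a) (h2 : K ≤ V' c) :
    K < V' b := by
  by_contra hcon
  push Not at hcon
  have hb : b ∈ Icc a c := ⟨hab.le, hbc.le⟩
  have hcont : ContinuousOn V' (Icc a c) := fun x hx =>
    (hd x (lt_of_lt_of_le ha hx.1)).continuousAt.continuousWithinAt
  have hloc : ∀ m ∈ Ioo a c, IsMinOn V' (Icc a c) m → m = UM := by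
    intro m hm hmin
    have hm0 : 0 < m := ha.trans hm.1
    exact (hz m hm0).1 ((hmin.isLocalMin (Icc_mem_nhds hm.1 hm.2)).hasDerivAt_eq_zero (hd m hm0))
  have hex : ∃ m ∈ Ioo a c, IsMinOn V' (Icc a c) m := by
    obtain ⟨x, hx, hmin⟩ := isCompact_Icc.exists_isMinOn ⟨b, hb⟩ hcont
    by_cases hxa : x = a
    · subst hxa
      exact ⟨b, ⟨hab, hbc⟩, fun y hy => (hcon.trans h1).trans (hmin hy)⟩
    by_cases hxc : x = c
    · subst hxc
      exact ⟨b, ⟨hab, hbc⟩, fun y hy => (hcon.trans h2).trans (hmin hy)⟩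
    exact ⟨x, ⟨lt_of_le_of_ne hx.1 (Ne.symm hxa), lt_of_le_of_ne hx.2 hxc⟩, hmin⟩
  obtain ⟨m, hm, hmin⟩ := hex
  have hmU := hloc m hm hmin
  have hm2 : (a + m) / 2 ∈ Ioo a c := ⟨by linarith [hm.1], by linarith [hm.1, hm.2]⟩
  have := hloc _ hm2 (fun y hy => by
    have q := hmax ((a + m) / 2) (ha.trans hm2.1)
    rw [← hmU] at q
    exact q.trans (hmin hy))
  linarith [hm.1]

theorem stmt2
    (V V' V'' κ : ℝ → ℝ) (τ UM K c K₁ : ℝ) (uMx umx : ℝ → ℝ)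
    (hA1 : A1 V V' V'' UM) (hA2 : A2 κ) (hτ : 0 < τ) (hK : K ≠ 0)
    (huMx : UMaxHyp V' UM uMx) (humx : UMinHyp V' UM umx)
    (hK1 : K1Hyp V V' UM umx K₁)
    (u0 : ℝ)
    (hu0 : ((K, c) ∈ D1 V V' UM uMx umx ∧ ∃ u1 u2, ZerosD1 V K c u1 u0 u2) ∨
           ((K, c) ∈ D2 V V' umx K₁ ∧ ∃ u2, ZerosD2 V K c u0 u2)) :
    ∀ μ : ℝ, ¬ HasHO V V' κ τ K c μ u0 := by
  intro μ
  rintro ⟨u, w, ⟨hu, hw⟩, hp, lu', lu, lw', lw, hnt⟩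
  obtain ⟨hV, cV', hV', cV'', hV'pos, -, -, hUM, hmax, hzero⟩ := hA1
  obtain ⟨hκ, hκpos⟩ := hA2
  have hVd : ∀ x, 0 < x → HasDerivAt V (V' x) x := fun x hx =>
    (hV x hx.le).hasDerivAt (Ici_mem_nhds hx)
  have hcV : ContinuousOn V (Ici 0) := fun x hx => (hV x hx).continuousWithinAt
  have hV0 : 0 ≤ V' 0 := by
    have h : Tendsto V' (nhdsWithin 0 (Ioi 0)) (nhds (V' 0)) :=
      (cV' 0 self_mem_Ici).mono_left (nhdsWithin_mono _ Ioi_subset_Ici_self)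
    refine ge_of_tendsto h ?_
    filter_upwards [self_mem_nhdsWithin] with x hx
    exact (hV'pos x hx).le
  let F : ℝ → ℝ := fun x => K * x - V x - c
  have hF : ∀ x, 0 < x → HasDerivAt F (K - V' x) x := by
    intro x hx
    have := (((hasDerivAt_id x).const_mul K).sub (hVd x hx)).sub_const c
    exact this.congr_deriv (by simp)
  have hFc : ContinuousOn F (Ici 0) :=
    ((continuousOn_const.mul continuousOn_id).sub hcV).sub continuousOn_const
  have hmvt : ∀ p q, 0 ≤ p → p < q → F q ≤ F p → ∃ x ∈ Ioo p q, K ≤ V' x := by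
    intro p q hp0 hpq hle
    obtain ⟨x, hx, he⟩ := exists_hasDerivAt_eq_slope F (fun x => K - V' x) hpq
      (hFc.mono fun t ht => hp0.trans ht.1) (fun t ht => hF t (lt_of_le_of_lt hp0 ht.1))
    refine ⟨x, hx, ?_⟩
    have : (F q - F p) / (q - p) ≤ 0 := div_nonpos_of_nonpos_of_nonneg (by linarith) (by linarith)
    linarith
  have hfz : ∀ x, fTV V K c x = 0 → F x = 0 := by
    intro x hx
    simpa [fTV, hK] using hx
  -- basic facts on the equilibrium
  have hfacts : 0 < K ∧ 0 < u0 ∧ fTV V K c u0 = 0 ∧ K < V' u0 := by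
    rcases hu0 with ⟨⟨hK0, -⟩, u1, u2, h1, h2, h3, z1, z0, z2, -⟩ |
      ⟨hD, u2, h1, h3, z0, z2, -⟩
    · simp only at hK0
      obtain ⟨x, hx, hxK⟩ := hmvt u1 u0 h1.le h2 (by rw [hfz _ z1, hfz _ z0])
      obtain ⟨y, hy, hyK⟩ := hmvt u0 u2 (h1.trans h2).le h3 (by rw [hfz _ z2, hfz _ z0])
      exact ⟨by linarith, h1.trans h2, z0,
        aux_quasi V' V'' UM hV' hmax hzero x u0 y K (h1.trans hx.1) hx.2 hy.1 hxK hyK⟩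
    · have hD' : 0 < K ∧ c ≤ - V 0 := by
        rcases hD with ⟨q1, -, q2⟩ | ⟨q1, -, -, q2⟩
        · simp only [c0v] at q1 q2
          exact ⟨by linarith, q2.le⟩
        · simp only [c0v] at q1 q2
          exact ⟨q1, q2.le⟩
      obtain ⟨x, hx, hxK⟩ := hmvt 0 u0 le_rfl h1 (by
        rw [hfz _ z0]; simp only [F]; linarith [hD'.2])
      obtain ⟨y, hy, hyK⟩ := hmvt u0 u2 h1.le h3 (by rw [hfz _ z2, hfz _ z0])
      exact ⟨hD'.1, h1, z0,
        aux_quasi V' V'' UM hV' hmax hzero x u0 y K hx.1 hx.2 hy.1 hxK hyK⟩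
  obtain ⟨hKpos, hu0pos, hf0, hVu0⟩ := hfacts
  -- smoothness
  have sV' : ContDiffOn ℝ 1 V' (Ioi 0) := by
    refine (contDiffOn_succ_iff_deriv_of_isOpen (n := 0) isOpen_Ioi).2 ⟨?_, by simp, ?_⟩
    · exact fun x hx => (hV' x hx).differentiableAt.differentiableWithinAt
    · exact contDiffOn_zero.2 (cV''.congr fun x hx => (hV' x hx).deriv)
  have sV : ContDiffOn ℝ 1 V (Ioi 0) := by
    refine (contDiffOn_succ_iff_deriv_of_isOpen (n := 0) isOpen_Ioi).2 ⟨?_, by simp, ?_⟩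
    · exact fun x hx => (hVd x hx).differentiableAt.differentiableWithinAt
    · exact contDiffOn_zero.2 ((cV'.mono Ioi_subset_Ici_self).congr fun x hx => (hVd x hx).deriv)
  have sκ : ContDiffOn ℝ 1 (fun x => κ (1 / x)) (Ioi 0) := by
    refine hκ.comp (contDiffOn_const.div contDiffOn_id fun x hx => ne_of_gt hx) ?_
    intro x hx
    have hx0 : (0:ℝ) < x := hx
    exact one_div_pos.2 hx0
  have hκ' : ∀ x ∈ Ioi (0:ℝ), 0 < κ (1 / x) := fun x hx => hκpos _ (one_div_pos.2 hx)
  have sg1 : ContDiffOn ℝ 1 (g1TV κ τ) (Ioi 0) :=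
    contDiffOn_const.div (contDiffOn_const.mul sκ) fun x hx => (mul_pos hτ (hκ' x hx)).ne'
  have sg2 : ContDiffOn ℝ 1 (g2TV κ τ) (Ioi 0) :=
    contDiffOn_id.div (contDiffOn_const.mul sκ) fun x hx =>
      (mul_pos (mul_pos two_pos hτ) (hκ' x hx)).ne'
  have sf : ContDiffOn ℝ 1 (fTV V K c) (Ioi 0) :=
    (((contDiffOn_const.mul contDiffOn_id).sub sV).sub contDiffOn_const).div_const K
  have sh : ContDiffOn ℝ 1 (hTV V' K μ) (Ioi 0) :=
    ((contDiffOn_const.sub sV').div_const K).add contDiffOn_const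
  have hg1 : HasDerivAt (g1TV κ τ) (deriv (g1TV κ τ) u0) u0 :=
    ((sg1.contDiffAt (Ioi_mem_nhds hu0pos)).differentiableAt one_ne_zero).hasDerivAt
  have hfd : HasDerivAt (fTV V K c) ((K - V' u0) / K) u0 := (hF u0 hu0pos).div_const K
  have hG : HasDerivAt (fun x => g1TV κ τ x * fTV V K c x) (g1TV κ τ u0 * ((K - V' u0) / K)) u0 :=
    (hg1.mul hfd).congr_deriv (by rw [hf0]; ring)
  have hneg : g1TV κ τ u0 * ((K - V' u0) / K) < 0 := by
    refine mul_neg_of_pos_of_neg ?_ (div_neg_of_neg_of_pos (by linarith) hKpos)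
    exact one_div_pos.2 (mul_pos hτ (hκ' u0 hu0pos))
  exact hnt (aux_core (fun x => g1TV κ τ x * fTV V K c x) (fun x => g2TV κ τ x * hTV V' K μ x)
    (sg1.mul sf) (sg2.mul sh) u0 _ hu0pos hneg (by simp [hf0]) hG u w hu hw hp lu lw lu' lw')

end TrafficTW
end
end
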